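/- Suppose g(r) = o(r^{-c}) as r → ∞ for some c > 3d, and fix γ > 0. Let Δ_n denote the maximum vertex degree of G_n(r̂_n(γ)). Then almost surely, liminf_{n→∞} Δ_n/(log n) ≥ γ·H₊⁻¹((c − 3d)/(γ(c − d))). -/

import Mathlib

open MeasureTheory ProbabilityTheory Filter Set

noncomputable section

namespace RCM

/-- The toroidal metric on the unit cube. -/
def torusDist {d : ℕ} (x y : EuclideanSpace ℝ (Fin d)) : ℝ :=
  ⨅ z : Fin d → ℤ, ‖x - y - (WithLp.equiv 2 (Fin d → ℝ)).symm (fun i => (z i : ℝ))‖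

/-- The half-open unit cube `S = (-1/2, 1/2]^d`. -/
def cube (d : ℕ) : Set (EuclideanSpace ℝ (Fin d)) :=
  {x | ∀ i, x i ∈ Set.Ioc (-(1/2) : ℝ) (1/2)}

/-- The random connection model: i.i.d. uniform points `X`, coupled Poisson counts `N`,
i.i.d. uniform edge variables `U`, with the three families mutually independent, and a
non-increasing connection function `g : [0,∞) → [0,1]` with finite positive integral `α`. -/
structure Model (d : ℕ) {Ω : Type*} [MeasurableSpace Ω] (P : Measure Ω) where
  g : ℝ → ℝ
  α : ℝ
  X : ℕ → Ω → EuclideanSpace ℝ (Fin d)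
  N : ℕ → Ω → ℕ
  U : ℕ → ℕ → Ω → ℝ
  g_antitone : AntitoneOn g (Set.Ici 0)
  g_mem : ∀ r : ℝ, 0 ≤ r → g r ∈ Set.Icc (0 : ℝ) 1
  g_integrable : MeasureTheory.Integrable (fun x : EuclideanSpace ℝ (Fin d) => g ‖x‖)
  α_def : α = ∫ x : EuclideanSpace ℝ (Fin d), g ‖x‖
  α_pos : 0 < α
  X_meas : ∀ i, Measurable (X i)
  X_unif : ∀ i : ℕ, 1 ≤ i → Measure.map (X i) P = volume.restrict (cube d)
  X_indep : iIndepFun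
    (fun i : {i : ℕ // 1 ≤ i} => X i) P
  N_meas : ∀ n, Measurable (N n)
  N_mono : ∀ ω, Monotone fun n => N n ω
  N_poisson : ∀ n k : ℕ,
    P {ω | N n ω = k} = ENNReal.ofReal (Real.exp (-(n : ℝ)) * (n : ℝ) ^ k / k.factorial)
  U_meas : ∀ i j, Measurable (U i j)
  U_unif : ∀ i j : ℕ, 1 ≤ i → i < j →
    Measure.map (U i j) P = volume.restrict (Set.Icc (0 : ℝ) 1)
  U_indep : iIndepFun
    (fun p : {p : ℕ × ℕ // 1 ≤ p.1 ∧ p.1 < p.2} => U p.1.1 p.1.2) P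
  families_indep : iIndep
    (![MeasurableSpace.comap (fun ω => fun i : ℕ => X i ω) inferInstance,
       MeasurableSpace.comap (fun ω => fun n : ℕ => N n ω) inferInstance,
       MeasurableSpace.comap (fun ω => fun p : ℕ × ℕ => U p.1 p.2 ω) inferInstance]) P

variable {d : ℕ} {Ω : Type*} [MeasurableSpace Ω] {P : Measure Ω}

/-- Adjacency in the graph `G_n(r)`: vertices `1 ≤ i,j ≤ N_n` are joined iff
`U_{ij} ≤ g(dist(X_i,X_j)/r)`. -/
def adj (M : Model d P) (n : ℕ) (r : ℝ) (ω : Ω) (i j : ℕ) : Prop :=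
  i ≠ j ∧ 1 ≤ i ∧ 1 ≤ j ∧ i ≤ M.N n ω ∧ j ≤ M.N n ω ∧
    M.U (min i j) (max i j) ω ≤ M.g (torusDist (M.X i ω) (M.X j ω) / r)

/-- The degree of vertex `i` in `G_n(r)`. -/
def deg (M : Model d P) (n : ℕ) (r : ℝ) (ω : Ω) (i : ℕ) : ℕ :=
  {j : ℕ | adj M n r ω i j}.ncard

/-- `W_n(r)`, the number of isolated vertices of `G_n(r)`. -/
def isolatedCount (M : Model d P) (n : ℕ) (r : ℝ) (ω : Ω) : ℕ :=
  {i : ℕ | 1 ≤ i ∧ i ≤ M.N n ω ∧ deg M n r ω i = 0}.ncard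


/-- `r̂_n(γ)` defined by `r̂_n(γ)^d = γ log n / (α n)`. -/
def rhat (M : Model d P) (γ : ℝ) (n : ℕ) : ℝ :=
  (γ * Real.log n / (M.α * n)) ^ ((1 : ℝ) / d)

/-- `d_n`, the critical parameter for absence of isolated nodes. -/
def critRadius (M : Model d P) (n : ℕ) (ω : Ω) : ℝ :=
  sInf {r : ℝ | 0 < r ∧ isolatedCount M n r ω = 0}

/-- The maximum vertex degree `Δ_n` of `G_n(r)`. -/
def maxDeg (M : Model d P) (n : ℕ) (r : ℝ) (ω : Ω) : ℕ :=
  (Finset.Icc 1 (M.N n ω)).sup (deg M n r ω)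

/-- The minimum vertex degree `δ_n` of `G_n(r)`. -/
def minDeg (M : Model d P) (n : ℕ) (r : ℝ) (ω : Ω) : ℕ :=
  sInf {k : ℕ | ∃ i, 1 ≤ i ∧ i ≤ M.N n ω ∧ deg M n r ω i = k}

/-- The length (toroidal metric) of the longest edge of `G_n(r)` (`0` if there are no edges). -/
def longestEdge (M : Model d P) (n : ℕ) (r : ℝ) (ω : Ω) : ℝ :=
  sSup ({0} ∪ {t : ℝ | ∃ i j, adj M n r ω i j ∧ t = torusDist (M.X i ω) (M.X j ω)})

/-- Connectivity of `G_n(r)`: any two vertices are joined by a path. -/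
def connectedGraph (M : Model d P) (n : ℕ) (r : ℝ) (ω : Ω) : Prop :=
  ∀ i j : ℕ, 1 ≤ i → i ≤ M.N n ω → 1 ≤ j → j ≤ M.N n ω →
    Relation.ReflTransGen (adj M n r ω) i j

/-- `H(x) = 1 - x + x log x` (with `H(0) = 1`, since `log 0 = 0` in Lean). -/
def H (x : ℝ) : ℝ := 1 - x + x * Real.log x

/-- The inverse of the restriction of `H` to `[1, ∞)`. -/
def Hplusinv (y : ℝ) : ℝ := sInf {x : ℝ | 1 ≤ x ∧ y ≤ H x}

/-- The inverse of the restriction of `H` to `[0, 1]`. -/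
def Hminusinv (y : ℝ) : ℝ := sInf {x : ℝ | 0 ≤ x ∧ H x ≤ y}

/-- The standard normal distribution function. -/
def stdNormalCDF (x : ℝ) : ℝ :=
  ∫ t in Set.Iic x, Real.exp (-t ^ 2 / 2) / Real.sqrt (2 * Real.pi)

/-!
Fix `x` with `γ * H x < 1`. A vertex near the centre of the cube has, among about `n` further
vertices, a binomial number of neighbours with mean about `γ log n`, once edges longer than a large
multiple of the radius are discarded. It has `γ x log n` of them with probability at least
`n ^ (-γ H x + o(1))`, so the expected number of such vertices diverges. For short edges the
neighbourhoods of two distant vertices are disjoint, so the corresponding events are negatively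
correlated, and the pairs of close vertices contribute only a factor `O(log n)` to the variance;
by Chebyshev such a vertex is missing with probability `n ^ (-δ)`. Borel–Cantelli applies along
`n = (k + 2) ^ s` with `s * δ > 1`, and the gaps are filled by comparing a graph with
`(k + 1) ^ s < n ≤ (k + 2) ^ s` to the one with the points of time `(k + 1) ^ s` and the radius of
time `(k + 2) ^ s`. Letting `x` increase to `Hplusinv (1 / γ)` gives the bound.

As `liminf` takes a junk value on sequences of reals tending to infinity, a crude upper bound
`O(log n)` for the maximum degree along `n = (k + 2) ^ 2` is needed too.
-/

lemma measurePreserving_pi_of_iIndepFun [IsProbabilityMeasure P] {ι : Type*} [Fintype ι]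
    {Y : ι → Type*} [∀ i, MeasurableSpace (Y i)] {μ : ∀ i, Measure (Y i)} {X : ∀ i, Ω → Y i}
    (hX : ∀ i, MeasurePreserving (X i) P (μ i)) (h : iIndepFun X P) :
    MeasurePreserving (fun ω i => X i ω) P (Measure.pi μ) where
  measurable := measurable_pi_lambda _ fun i => (hX i).measurable
  map_eq := by
    rw [(iIndepFun_iff_map_fun_eq_pi_map fun i => (hX i).aemeasurable).1 h]
    simp only [(hX _).map_eq]

lemma measurePreserving_prodMk_of_indepFun [IsFiniteMeasure P] {Y Z : Type*} [MeasurableSpace Y]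
    [MeasurableSpace Z] {μ : Measure Y} {ν : Measure Z} {f : Ω → Y} {g : Ω → Z}
    (hf : MeasurePreserving f P μ) (hg : MeasurePreserving g P ν) (h : IndepFun f g P) :
    MeasurePreserving (fun ω => (f ω, g ω)) P (μ.prod ν) where
  measurable := hf.measurable.prodMk hg.measurable
  map_eq := by
    rw [(indepFun_iff_map_prod_eq_prod_map_map hf.aemeasurable hg.aemeasurable).1 h, hf.map_eq,
      hg.map_eq]

lemma memLp_indicator_one [IsFiniteMeasure P] {A : Set Ω} (hA : MeasurableSet A) :
    MemLp (A.indicator (1 : Ω → ℝ)) 2 P :=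
  memLp_indicator_const 2 hA 1 (Or.inr (measure_ne_top P A))

lemma covariance_indicator_one [IsProbabilityMeasure P] {A B : Set Ω} (hA : MeasurableSet A)
    (hB : MeasurableSet B) :
    cov[A.indicator (1 : Ω → ℝ), B.indicator 1; P] = P.real (A ∩ B) - P.real A * P.real B := by
  rw [covariance_eq_sub (memLp_indicator_one hA) (memLp_indicator_one hB), ← inter_indicator_one,
    integral_indicator_one (hA.inter hB), integral_indicator_one hA, integral_indicator_one hB]

lemma variance_sum_indicator_one_le [IsProbabilityMeasure P] {ι : Type*} {s : Finset ι}
    {A : ι → Set Ω} (hA : ∀ i ∈ s, MeasurableSet (A i)) {q κ : ℝ} (hκ : 0 ≤ κ)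
    (hq : ∀ i ∈ s, P.real (A i) = q)
    (hκq : ∀ i ∈ s, ∀ j ∈ s, i ≠ j → P.real (A i ∩ A j) ≤ q ^ 2 + κ * q) :
    Var[∑ i ∈ s, (A i).indicator 1; P] ≤ s.card * (q + s.card * (κ * q)) := by
  classical
  rw [variance_sum' fun i hi => memLp_indicator_one (hA i hi), ← nsmul_eq_mul]
  refine Finset.sum_le_card_nsmul _ _ _ fun i hi => ?_
  have hq0 : 0 ≤ q := hq i hi ▸ measureReal_nonneg
  have hcov : ∀ j ∈ s, cov[(A i).indicator (1 : Ω → ℝ), (A j).indicator 1; P] ≤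
      (if i = j then q else 0) + κ * q := by
    intro j hj
    rw [covariance_indicator_one (hA i hi) (hA j hj), hq i hi, hq j hj]
    split_ifs with hij
    · rw [← hij, inter_self, hq i hi]
      nlinarith [mul_nonneg hκ hq0]
    · linarith [hκq i hi j hj hij]
  calc _ ≤ ∑ j ∈ s, ((if i = j then q else 0) + κ * q) := Finset.sum_le_sum hcov
    _ = q + s.card * (κ * q) := by
      rw [Finset.sum_add_distrib, Finset.sum_ite_eq, if_pos hi, Finset.sum_const, nsmul_eq_mul]

lemma measureReal_forall_notMem_le [IsProbabilityMeasure P] {ι : Type*} {s : Finset ι}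
    (hs : s.Nonempty) {A : ι → Set Ω} (hA : ∀ i ∈ s, MeasurableSet (A i)) {q κ : ℝ} (hq0 : 0 < q)
    (hκ : 0 ≤ κ) (hq : ∀ i ∈ s, P.real (A i) = q)
    (hκq : ∀ i ∈ s, ∀ j ∈ s, i ≠ j → P.real (A i ∩ A j) ≤ q ^ 2 + κ * q) :
    P.real {ω | ∀ i ∈ s, ω ∉ A i} ≤ (1 + s.card * κ) / (s.card * q) := by
  have : (0 : ℝ) < s.card := by exact_mod_cast hs.card_pos
  set Z : Ω → ℝ := ∑ i ∈ s, (A i).indicator 1 with hZ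
  have hmean : P[Z] = s.card * q := by
    simp only [hZ, Finset.sum_apply]
    rw [integral_finsetSum _ fun i hi => (memLp_indicator_one (hA i hi)).integrable one_le_two,
      Finset.sum_congr rfl fun i hi => (integral_indicator_one (hA i hi)).trans (hq i hi),
      Finset.sum_const, nsmul_eq_mul]
  have hsub : {ω | ∀ i ∈ s, ω ∉ A i} ⊆ {ω | s.card * q ≤ |Z ω - P[Z]|} := fun ω hω => by
    have hZω : Z ω = 0 := by
      rw [hZ, Finset.sum_apply]
      exact Finset.sum_eq_zero fun i hi => indicator_of_notMem (hω i hi) _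
    simp only [mem_ofPred_eq, hZω, hmean, zero_sub, abs_neg, le_abs_self]
  calc P.real {ω | ∀ i ∈ s, ω ∉ A i} ≤ Var[Z; P] / (s.card * q) ^ 2 :=
        ENNReal.toReal_le_of_le_ofReal (div_nonneg (variance_nonneg Z P) (sq_nonneg _))
          ((measure_mono hsub).trans (meas_ge_le_variance_div_sq
            (memLp_finsetSum' s fun i hi => memLp_indicator_one (hA i hi)) (by positivity)))
    _ ≤ s.card * (q + s.card * (κ * q)) / (s.card * q) ^ 2 := by
        gcongr
        exact variance_sum_indicator_one_le hA hκ hq hκq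
    _ = (1 + s.card * κ) / (s.card * q) := by field_simp

lemma ae_eventually_notMem_of_le [IsFiniteMeasure P] {A : ℕ → Set Ω} {u : ℕ → ℝ}
    (hu : Summable u) (hA : ∀ᶠ k in atTop, P.real (A k) ≤ u k) :
    ∀ᵐ ω ∂P, ∀ᶠ k in atTop, ω ∉ A k := by
  have hsum : Summable fun k => P.real (A k) :=
    .of_norm_bounded_eventually_nat hu <| hA.mono fun k hk => by
      rwa [Real.norm_of_nonneg measureReal_nonneg]
  exact ae_eventually_notMem
    ((tsum_congr fun _ => (ofReal_measureReal).symm).trans_ne hsum.tsum_ofReal_ne_top)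

lemma summable_exp_neg_nat_mul {η : ℝ} (hη : 0 < η) :
    Summable fun n : ℕ => Real.exp (-(n * η)) := by
  simpa only [mul_neg] using Real.summable_exp_nat_mul_iff.2 (neg_lt_zero.2 hη)

lemma H_pos {x : ℝ} (hx : 0 < x) (hx1 : x ≠ 1) : 0 < H x := by
  have h := mul_lt_mul_of_pos_left
    (Real.log_lt_sub_one_of_pos (inv_pos.2 hx) (inv_ne_one.2 hx1)) hx
  rw [Real.log_inv, mul_sub, mul_inv_cancel₀ hx.ne'] at h
  unfold H
  linarith

lemma mgf_natCast_poissonMeasure (r : NNReal) (h : ℝ) :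
    mgf (Nat.cast : ℕ → ℝ) (poissonMeasure r) h = Real.exp (r * (Real.exp h - 1)) := by
  have hterm : ∀ n : ℕ, (Real.exp (-r) * r ^ n / n.factorial) • Real.exp (h * n)
      = Real.exp (-r) * ((r * Real.exp h) ^ n / n.factorial) := fun n => by
    rw [smul_eq_mul, mul_comm h, Real.exp_nat_mul, mul_pow]
    ring
  rw [mgf, integral_poissonMeasure]
  simp_rw [hterm]
  rw [tsum_mul_left, (NormedSpace.expSeries_div_hasSum_exp (r * Real.exp h)).tsum_eq,
    ← Real.exp_eq_exp_ℝ, ← Real.exp_add]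
  ring_nf

lemma integrable_exp_mul_natCast_poissonMeasure (r : NNReal) (h : ℝ) :
    Integrable (fun n : ℕ => Real.exp (h * n)) (poissonMeasure r) := by
  by_contra hint
  have := mgf_natCast_poissonMeasure r h
  rw [mgf_undef hint] at this
  exact (Real.exp_pos _).ne this

lemma poissonMeasure_real_le_mul_le {x : ℝ} (hx : 0 < x) (hx1 : x ≤ 1) (r : NNReal) :
    (poissonMeasure r).real {n : ℕ | (n : ℝ) ≤ x * r} ≤ Real.exp (-(r * H x)) := by
  refine (measure_le_le_exp_mul_mgf (x * r) (Real.log_nonpos hx.le hx1)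
    (integrable_exp_mul_natCast_poissonMeasure r _)).trans_eq ?_
  rw [mgf_natCast_poissonMeasure, ← Real.exp_add, Real.exp_log hx, H]
  ring_nf

lemma poissonMeasure_real_mul_le_le {x : ℝ} (hx1 : 1 ≤ x) (r : NNReal) :
    (poissonMeasure r).real {n : ℕ | x * r ≤ n} ≤ Real.exp (-(r * H x)) := by
  refine (measure_ge_le_exp_mul_mgf (x * r) (Real.log_nonneg hx1)
    (integrable_exp_mul_natCast_poissonMeasure r _)).trans_eq ?_
  rw [mgf_natCast_poissonMeasure, ← Real.exp_add, Real.exp_log (by positivity), H]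
  ring_nf

section BinomialTail

/-- The tail probability `P(Bin(b, p) ≥ t)`, defined through its one-step recursion. -/
def binTail (p : ℝ) : ℕ → ℕ → ℝ
  | _, 0 => 1
  | 0, _ + 1 => 0
  | b + 1, t + 1 => p * binTail p b t + (1 - p) * binTail p b (t + 1)

variable {p : ℝ}

lemma binTail_zero_right (p : ℝ) (b : ℕ) : binTail p b 0 = 1 := by
  cases b <;> rfl

lemma binTail_nonneg (h0 : 0 ≤ p) (h1 : p ≤ 1) (b t : ℕ) : 0 ≤ binTail p b t := by
  induction b generalizing t with
  | zero => cases t <;> simp [binTail]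
  | succ b ih =>
    cases t with
    | zero => simp [binTail]
    | succ t => exact add_nonneg (mul_nonneg h0 (ih t)) (mul_nonneg (sub_nonneg.2 h1) (ih (t + 1)))

lemma binTail_antitone_right (h0 : 0 ≤ p) (h1 : p ≤ 1) (b : ℕ) : Antitone (binTail p b) := by
  refine antitone_nat_of_succ_le fun t => ?_
  induction b generalizing t with
  | zero => cases t <;> simp [binTail]
  | succ b ih =>
    have := sub_nonneg.2 h1
    cases t with
    | zero =>
      have h := ih 0
      rw [binTail_zero_right] at h
      simp only [binTail, binTail_zero_right]
      nlinarith
    | succ t =>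
      simp only [binTail]
      gcongr <;> apply ih

lemma choose_mul_pow_mul_pow_le_binTail (h0 : 0 ≤ p) (h1 : p ≤ 1) (b t : ℕ) :
    (b.choose t : ℝ) * p ^ t * (1 - p) ^ b ≤ binTail p b t := by
  have hq : 0 ≤ 1 - p := sub_nonneg.2 h1
  induction b generalizing t with
  | zero => cases t <;> simp [binTail]
  | succ b ih =>
    cases t with
    | zero => simpa [binTail] using pow_le_one₀ hq (by linarith)
    | succ t =>
      calc _ = p * ((b.choose t : ℝ) * p ^ t * (1 - p) ^ b) * (1 - p)
            + (1 - p) * ((b.choose (t + 1) : ℝ) * p ^ (t + 1) * (1 - p) ^ b) := by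
            rw [Nat.choose_succ_succ]; push_cast; ring
        _ ≤ p * ((b.choose t : ℝ) * p ^ t * (1 - p) ^ b) * 1
            + (1 - p) * ((b.choose (t + 1) : ℝ) * p ^ (t + 1) * (1 - p) ^ b) := by
            gcongr; linarith
        _ ≤ p * binTail p b t + (1 - p) * binTail p b (t + 1) := by
            rw [mul_one]
            gcongr <;> apply ih

lemma binTail_le_choose_mul_pow (h0 : 0 ≤ p) (h1 : p ≤ 1) (b t : ℕ) :
    binTail p b t ≤ (b.choose t : ℝ) * p ^ t := by
  induction b generalizing t with
  | zero => cases t <;> simp [binTail]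
  | succ b ih =>
    cases t with
    | zero => simp [binTail]
    | succ t =>
      calc binTail p (b + 1) (t + 1) = p * binTail p b t + (1 - p) * binTail p b (t + 1) := rfl
        _ ≤ p * ((b.choose t : ℝ) * p ^ t)
            + 1 * ((b.choose (t + 1) : ℝ) * p ^ (t + 1)) := by
            exact add_le_add (mul_le_mul_of_nonneg_left (ih t) h0)
              (mul_le_mul (by linarith) (ih (t + 1)) (binTail_nonneg h0 h1 _ _) zero_le_one)
        _ = ((b + 1).choose (t + 1) : ℝ) * p ^ (t + 1) := by
            rw [Nat.choose_succ_succ]; push_cast; ring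

lemma exp_neg_mul_div_le_one_sub_pow (h1 : p < 1) (b : ℕ) :
    Real.exp (-(b * p / (1 - p))) ≤ (1 - p) ^ b := by
  have h0 : 0 < 1 - p := by linarith
  rw [← Real.le_log_iff_exp_le (pow_pos h0 b), Real.log_pow]
  calc -(b * p / (1 - p)) = b * (1 - (1 - p)⁻¹) := by field_simp; ring
    _ ≤ b * Real.log (1 - p) := by
      gcongr
      exact Real.one_sub_inv_le_log_of_pos h0

lemma log_factorial_le {t : ℕ} (ht : 1 ≤ t) :
    Real.log t.factorial ≤ t * Real.log t - t + 1 + Real.log t := by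
  induction t, ht using Nat.le_induction with
  | base => simp
  | succ t ht ih =>
    have ht0 : (0 : ℝ) < t := by exact_mod_cast ht
    have h := Real.one_sub_inv_le_log_of_pos (x := ((t : ℝ) + 1) / t) (by positivity)
    rw [Real.log_div (by positivity) ht0.ne',
      show (1 : ℝ) - (((t : ℝ) + 1) / t)⁻¹ = 1 / (t + 1) by field_simp; ring,
      div_le_iff₀ (by positivity)] at h
    rw [Nat.factorial_succ]
    push_cast
    rw [Real.log_mul (by positivity) (by positivity)]
    nlinarith

lemma exp_le_pow_div_factorial {x : ℝ} (hx : 0 < x) {t : ℕ} (ht : 1 ≤ t) :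
    Real.exp (t * (Real.log x - Real.log t + 1) - (1 + Real.log t)) ≤ x ^ t / t.factorial := by
  rw [← Real.le_log_iff_exp_le (by positivity), Real.log_div (by positivity) (by positivity),
    Real.log_pow]
  linarith [log_factorial_le ht]

lemma pow_div_factorial_le_choose {b t : ℕ} (htb : t ≤ b) :
    ((b : ℝ) - t) ^ t / t.factorial ≤ b.choose t := by
  refine le_trans ?_ (Nat.pow_le_choose (α := ℝ) t b)
  have htb' : (0 : ℝ) ≤ (b : ℝ) - t := sub_nonneg.2 (by exact_mod_cast htb)
  gcongr
  rw [Nat.cast_sub (by omega)]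
  push_cast
  linarith

lemma exp_le_binTail {b t : ℕ} (hp0 : 0 < p) (hp1 : p < 1) (ht : 1 ≤ t) (htb : t < b) :
    Real.exp (t * (Real.log (((b : ℝ) - t) * p) - Real.log t + 1) - (1 + Real.log t)
      - b * p / (1 - p)) ≤ binTail p b t := by
  have htb' : (0 : ℝ) < (b : ℝ) - t := sub_pos.2 (by exact_mod_cast htb)
  have : 0 < 1 - p := by linarith
  calc _ = Real.exp (t * (Real.log (((b : ℝ) - t) * p) - Real.log t + 1) - (1 + Real.log t))
        * Real.exp (-(b * p / (1 - p))) := by rw [← Real.exp_add, ← sub_eq_add_neg]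
    _ ≤ (((b : ℝ) - t) * p) ^ t / t.factorial * (1 - p) ^ b := by
        gcongr
        · exact exp_le_pow_div_factorial (by positivity) ht
        · exact exp_neg_mul_div_le_one_sub_pow hp1 b
    _ = ((b : ℝ) - t) ^ t / t.factorial * p ^ t * (1 - p) ^ b := by rw [mul_pow]; ring
    _ ≤ b.choose t * p ^ t * (1 - p) ^ b := by
        gcongr
        exact pow_div_factorial_le_choose htb.le
    _ ≤ binTail p b t := choose_mul_pow_mul_pow_le_binTail hp0.le hp1.le b t

end BinomialTail

section Hits

/-- The number of coordinates of `w` lying in `S`. -/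
def hits {Y : Type*} (S : Set Y) {b : ℕ} (w : Fin b → Y) : ℕ :=
  ∑ j, S.indicator 1 (w j)

lemma hits_cons {Y : Type*} (S : Set Y) {b : ℕ} (y : Y) (w : Fin b → Y) :
    hits S (Fin.cons y w : Fin (b + 1) → Y) = S.indicator 1 y + hits S w := by
  simp only [hits, Fin.sum_univ_succ, Fin.cons_zero, Fin.cons_succ]

variable {A B Y : Type*} [MeasurableSpace A] [MeasurableSpace B] [MeasurableSpace Y]

lemma measurable_hits {S : A → Set Y} (hS : MeasurableSet {z : A × Y | z.2 ∈ S z.1}) {b : ℕ}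
    {f : B → A} {w : B → Fin b → Y} (hf : Measurable f) (hw : Measurable w) :
    Measurable fun z => hits (S (f z)) (w z) :=
  Finset.measurable_fun_sum _ fun j _ =>
    (measurable_one.indicator hS).comp (hf.prodMk ((measurable_pi_apply j).comp hw))

lemma measurableSet_le_hits {S : Set Y} (hS : MeasurableSet S) (b t : ℕ) :
    MeasurableSet {w : Fin b → Y | t ≤ hits S w} :=
  measurableSet_le measurable_const
    (measurable_hits (S := fun _ : Unit => S) (measurable_snd hS) (f := fun _ => ())
      measurable_const measurable_id)

lemma measureReal_prod_eq_integral {μ : Measure A} {ν : Measure B} [IsFiniteMeasure ν]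
    {F : Set (A × B)} (hF : MeasurableSet F) :
    (μ.prod ν).real F = ∫ x, ν.real (Prod.mk x ⁻¹' F) ∂μ := by
  rw [measureReal_def, Measure.prod_apply hF, ← integral_toReal
    (measurable_measure_prodMk_left hF).aemeasurable (.of_forall fun _ => measure_lt_top _ _)]
  rfl

lemma measureReal_pi_succ (μ : Measure Y) [IsProbabilityMeasure μ] {b : ℕ}
    {F : Set (Fin (b + 1) → Y)} (hF : MeasurableSet F) :
    (Measure.pi fun _ => μ).real F =
      ∫ y, (Measure.pi fun _ : Fin b => μ).real {w | (Fin.cons y w : Fin (b + 1) → Y) ∈ F} ∂μ := by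
  have e := (measurePreserving_piFinSuccAbove (fun _ : Fin (b + 1) => μ) 0).symm
  rw [← e.measureReal_preimage hF.nullMeasurableSet, measureReal_prod_eq_integral (e.measurable hF)]
  simp only [MeasurableEquiv.piFinSuccAbove_symm_apply, Fin.insertNthEquiv, preimage_preimage,
    Equiv.coe_fn_mk, Fin.insertNth_zero']
  rfl

lemma integral_eq_of_disjoint {μ : Measure Y} [IsProbabilityMeasure μ] {S S' : Set Y}
    (hS : MeasurableSet S) (hS' : MeasurableSet S') (hd : Disjoint S S') {f : Y → ℝ} {a a' c : ℝ}
    (ha : ∀ y ∈ S, f y = a) (ha' : ∀ y ∈ S', f y = a') (hc : ∀ y, y ∉ S → y ∉ S' → f y = c) :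
    ∫ y, f y ∂μ = μ.real S * a + μ.real S' * a' + (1 - μ.real S - μ.real S') * c := by
  have hf : ∀ y, f y = (S.indicator (fun _ => a - c) + S'.indicator fun _ => a' - c) y + c := by
    intro y
    by_cases hy : y ∈ S
    · simp [hy, hd.notMem_of_mem_left hy, ha y hy]
    · by_cases hy' : y ∈ S'
      · simp [hy, hy', ha' y hy']
      · simp [hy, hy', hc y hy hy']
  have hi := (integrable_const (μ := μ) (a - c)).indicator hS
  have hi' := (integrable_const (μ := μ) (a' - c)).indicator hS'
  rw [integral_congr_ae (.of_forall hf), integral_add (hi.add hi') (integrable_const _),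
    integral_add' hi hi',
    integral_indicator_const _ hS, integral_indicator_const _ hS', integral_const, probReal_univ]
  simp only [smul_eq_mul]
  ring

variable (μ : Measure Y) [IsProbabilityMeasure μ] {S S' : Set Y}

lemma measureReal_pi_le_hits (hS : MeasurableSet S) (b t : ℕ) :
    (Measure.pi fun _ : Fin b => μ).real {w | t ≤ hits S w} = binTail (μ.real S) b t := by
  induction b generalizing t with
  | zero => cases t <;> simp [binTail, hits]
  | succ b ih =>
    cases t with
    | zero => simp [binTail]
    | succ t =>
      rw [measureReal_pi_succ μ (measurableSet_le_hits hS _ _),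
        integral_eq_of_disjoint hS .empty (disjoint_empty S) (a := binTail (μ.real S) b t)
          (a' := 0) (c := binTail (μ.real S) b (t + 1))]
      · simp [binTail]
      · intro y hy
        simp [hits_cons, hy, ← ih, Nat.lt_one_add_iff]
      · simp
      · intro y hy _
        simp [hits_cons, hy, ← ih]

lemma measureReal_pi_le_hits_and_le_hits_succ (hS : MeasurableSet S) (hS' : MeasurableSet S')
    (hd : Disjoint S S') (b s t : ℕ) :
    (Measure.pi fun _ : Fin (b + 1) => μ).real {w | s + 1 ≤ hits S w ∧ t + 1 ≤ hits S' w}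
      = μ.real S * (Measure.pi fun _ : Fin b => μ).real {w | s ≤ hits S w ∧ t + 1 ≤ hits S' w}
        + μ.real S' * (Measure.pi fun _ : Fin b => μ).real {w | s + 1 ≤ hits S w ∧ t ≤ hits S' w}
        + (1 - μ.real S - μ.real S')
          * (Measure.pi fun _ : Fin b => μ).real {w | s + 1 ≤ hits S w ∧ t + 1 ≤ hits S' w} := by
  refine (measureReal_pi_succ μ
    ((measurableSet_le_hits hS _ (s + 1)).inter (measurableSet_le_hits hS' _ (t + 1)))).trans ?_
  refine integral_eq_of_disjoint hS hS' hd (fun y hy => ?_) (fun y hy => ?_) fun y hy hy' => ?_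
  · simp [hits_cons, hy, hd.notMem_of_mem_left hy, Nat.lt_one_add_iff]
  · simp [hits_cons, hy, hd.notMem_of_mem_right hy, Nat.lt_one_add_iff]
  · simp [hits_cons, hy, hy']

lemma binTail_mul_recursion_le {p p' : ℝ} (h0 : 0 ≤ p) (h1 : p ≤ 1) (h0' : 0 ≤ p') (h1' : p' ≤ 1)
    (b s t : ℕ) :
    p * (binTail p b s * binTail p' b (t + 1)) + p' * (binTail p b (s + 1) * binTail p' b t)
        + (1 - p - p') * (binTail p b (s + 1) * binTail p' b (t + 1))
      ≤ binTail p (b + 1) (s + 1) * binTail p' (b + 1) (t + 1) := by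
  have hs := sub_nonneg.2 (binTail_antitone_right h0 h1 b s.le_succ)
  have ht := sub_nonneg.2 (binTail_antitone_right h0' h1' b t.le_succ)
  rw [← sub_nonneg]
  refine (mul_nonneg (mul_nonneg h0 h0') (mul_nonneg hs ht)).trans_eq ?_
  simp only [binTail, Nat.succ_eq_add_one]
  ring

lemma measureReal_pi_le_hits_and_le_hits_le (hS : MeasurableSet S) (hS' : MeasurableSet S')
    (hd : Disjoint S S') (b s t : ℕ) :
    (Measure.pi fun _ : Fin b => μ).real {w | s ≤ hits S w ∧ t ≤ hits S' w}
      ≤ binTail (μ.real S) b s * binTail (μ.real S') b t := by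
  induction b generalizing s t with
  | zero => cases s <;> cases t <;> simp [binTail, hits]
  | succ b ih =>
    rcases s with _ | s
    · simpa only [Nat.zero_le, true_and, binTail_zero_right, one_mul] using
        (measureReal_pi_le_hits μ hS' _ _).le
    rcases t with _ | t
    · simpa only [Nat.zero_le, and_true, binTail_zero_right, mul_one] using
        (measureReal_pi_le_hits μ hS _ _).le
    have hrest : 0 ≤ 1 - μ.real S - μ.real S' := by
      linarith [measureReal_union (μ := μ) hd hS', measureReal_le_one (μ := μ) (s := S ∪ S')]
    rw [measureReal_pi_le_hits_and_le_hits_succ μ hS hS' hd]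
    exact (by gcongr <;> apply ih : _ ≤ _).trans (binTail_mul_recursion_le measureReal_nonneg
      measureReal_le_one measureReal_nonneg measureReal_le_one b s t)

end Hits

section Star

variable {A Y Z : Type*} [MeasurableSpace A] [MeasurableSpace Y] [MeasurableSpace Z]
  (ν : Measure A) {μ : Measure Y} {π : Measure Z} [IsProbabilityMeasure π]
  {I : Set A} {S : A → Set Y} {D : Set (A × A)} {p κ : ℝ}

lemma measurableSet_mem_and_le_hits (hI : MeasurableSet I)
    (hS : MeasurableSet {z : A × Y | z.2 ∈ S z.1}) {b : ℕ} {f : Z → A} {w : Z → Fin b → Y}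
    (hf : Measurable f) (hw : Measurable w) (t : ℕ) :
    MeasurableSet {z | f z ∈ I ∧ t ≤ hits (S (f z)) (w z)} :=
  (hf hI).inter (measurableSet_le measurable_const (measurable_hits hS hf hw))

lemma measureReal_prod_pi_le_hits [IsProbabilityMeasure μ] (hI : MeasurableSet I)
    (hS : MeasurableSet {z : A × Y | z.2 ∈ S z.1}) (hp : ∀ x ∈ I, μ.real (S x) = p) (b t : ℕ) :
    (ν.prod (Measure.pi fun _ : Fin b => μ)).real {z | z.1 ∈ I ∧ t ≤ hits (S z.1) z.2}
      = ν.real I * binTail p b t := by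
  have hsection : ∀ x, (Measure.pi fun _ : Fin b => μ).real
      (Prod.mk x ⁻¹' {z : A × (Fin b → Y) | z.1 ∈ I ∧ t ≤ hits (S z.1) z.2})
      = I.indicator (fun _ => binTail p b t) x := by
    intro x
    by_cases hx : x ∈ I
    · simpa [hx, hp x hx] using measureReal_pi_le_hits μ (measurable_prodMk_left (x := x) hS) b t
    · simp [hx]
  rw [measureReal_prod_eq_integral
      (measurableSet_mem_and_le_hits hI hS measurable_fst measurable_snd t),
    integral_congr_ae (.of_forall hsection), integral_indicator_const _ hI, smul_eq_mul]

lemma measureReal_prod_pi_le_hits_le_choose_mul_pow [IsProbabilityMeasure ν]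
    [IsProbabilityMeasure μ] (hI : MeasurableSet I) (hS : MeasurableSet {z : A × Y | z.2 ∈ S z.1})
    (hp : ∀ᵐ x ∂ν, μ.real (S x) ≤ p) (b t : ℕ) :
    (ν.prod (Measure.pi fun _ : Fin b => μ)).real {z | z.1 ∈ I ∧ t ≤ hits (S z.1) z.2}
      ≤ b.choose t * p ^ t := by
  rw [measureReal_prod_eq_integral
    (measurableSet_mem_and_le_hits hI hS measurable_fst measurable_snd t)]
  refine (integral_mono_of_nonneg (.of_forall fun _ => measureReal_nonneg)
    (integrable_const (b.choose t * p ^ t)) (hp.mono fun x hx => ?_)).trans_eq (by simp)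
  calc _ ≤ (Measure.pi fun _ : Fin b => μ).real {w | t ≤ hits (S x) w} :=
        measureReal_mono fun _ hw => hw.2
    _ = binTail (μ.real (S x)) b t := measureReal_pi_le_hits μ (measurable_prodMk_left hS) b t
    _ ≤ b.choose t * μ.real (S x) ^ t :=
        binTail_le_choose_mul_pow measureReal_nonneg measureReal_le_one b t
    _ ≤ b.choose t * p ^ t := by gcongr

lemma measureReal_prod_fst_mem_inter_le [IsFiniteMeasure ν] (hI : MeasurableSet I)
    (hD : MeasurableSet D) (hκ : ∀ x ∈ I, ν.real (Prod.mk x ⁻¹' D) ≤ κ) :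
    (ν.prod ν).real (Prod.fst ⁻¹' I ∩ D) ≤ ν.real I * κ := by
  have hF := (measurable_fst hI).inter hD
  rw [measureReal_prod_eq_integral hF, ← smul_eq_mul, ← integral_indicator_const _ hI]
  refine integral_mono_of_nonneg (.of_forall fun _ => measureReal_nonneg)
    ((integrable_const κ).indicator hI) (.of_forall fun x => ?_)
  by_cases hx : x ∈ I
  · simpa [hx] using (measureReal_mono inter_subset_right).trans (hκ x hx)
  · simp [preimage_inter, preimage_preimage, hx]

omit [MeasurableSpace A] in
/- The two counts are negatively correlated when `(x, y) ∉ D`; otherwise one of them is dropped. -/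
lemma measureReal_pi_le_hits_comp_and_le_hits_comp_le {f f' : Z → Y}
    (hf : MeasurePreserving f π μ) (hf' : MeasurePreserving f' π μ)
    (hS : ∀ x, MeasurableSet (S x)) (hp : ∀ x ∈ I, μ.real (S x) = p)
    (hD : ∀ x ∈ I, ∀ y ∈ I, (x, y) ∉ D → Disjoint (f ⁻¹' S x) (f' ⁻¹' S y)) (b t : ℕ) {x y : A}
    (hx : x ∈ I) (hy : y ∈ I) :
    (Measure.pi fun _ : Fin b => π).real
        {w | t ≤ hits (S x) (f ∘ w) ∧ t ≤ hits (S y) (f' ∘ w)}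
      ≤ binTail p b t ^ 2 + D.indicator (fun _ => binTail p b t) (x, y) := by
  have hpx := (hf.measureReal_preimage (hS x).nullMeasurableSet).trans (hp x hx)
  have hpy := (hf'.measureReal_preimage (hS y).nullMeasurableSet).trans (hp y hy)
  by_cases hxy : (x, y) ∈ D
  · rw [indicator_of_mem hxy]
    refine le_add_of_nonneg_of_le (sq_nonneg _) ?_
    rw [← hpx, ← measureReal_pi_le_hits π (hf.measurable (hS x))]
    exact measureReal_mono fun w hw => hw.1
  · rw [indicator_of_notMem hxy, add_zero, sq]
    have h := measureReal_pi_le_hits_and_le_hits_le π (hf.measurable (hS x))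
      (hf'.measurable (hS y)) (hD x hx y hy hxy) b t t
    rwa [hpx, hpy] at h

omit [IsProbabilityMeasure π] in
lemma measurableSet_mem_and_le_hits_inter {f f' : Z → Y} (hf : Measurable f) (hf' : Measurable f')
    (hI : MeasurableSet I) (hS : MeasurableSet {z : A × Y | z.2 ∈ S z.1}) (b t : ℕ) :
    MeasurableSet {z : (A × A) × (Fin b → Z) |
      (z.1.1 ∈ I ∧ t ≤ hits (S z.1.1) (f ∘ z.2)) ∧ z.1.2 ∈ I ∧ t ≤ hits (S z.1.2) (f' ∘ z.2)} :=
  (measurableSet_mem_and_le_hits hI hS (by fun_prop) (by fun_prop) t).inter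
    (measurableSet_mem_and_le_hits hI hS (by fun_prop) (by fun_prop) t)

lemma measureReal_prod_pi_le_hits_and_le_hits_le [IsFiniteMeasure ν] {f f' : Z → Y}
    (hf : MeasurePreserving f π μ) (hf' : MeasurePreserving f' π μ) (hI : MeasurableSet I)
    (hS : MeasurableSet {z : A × Y | z.2 ∈ S z.1}) (hp : ∀ x ∈ I, μ.real (S x) = p)
    (hDm : MeasurableSet D)
    (hD : ∀ x ∈ I, ∀ y ∈ I, (x, y) ∉ D → Disjoint (f ⁻¹' S x) (f' ⁻¹' S y))
    (hκ : ∀ x ∈ I, ν.real (Prod.mk x ⁻¹' D) ≤ κ) {b t : ℕ} (h0 : 0 ≤ binTail p b t) :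
    ((ν.prod ν).prod (Measure.pi fun _ : Fin b => π)).real
        {z | (z.1.1 ∈ I ∧ t ≤ hits (S z.1.1) (f ∘ z.2)) ∧
          z.1.2 ∈ I ∧ t ≤ hits (S z.1.2) (f' ∘ z.2)}
      ≤ (ν.real I * binTail p b t) ^ 2 + κ * (ν.real I * binTail p b t) := by
  have hQ := measurableSet_mem_and_le_hits_inter hf.measurable hf'.measurable hI hS b t
  have hI2 : MeasurableSet (I ×ˢ I) := hI.prod hI
  have hID : MeasurableSet (Prod.fst ⁻¹' I ∩ D) := (measurable_fst hI).inter hDm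
  rw [measureReal_prod_eq_integral hQ]
  calc _ ≤ ∫ z, (I ×ˢ I).indicator (fun _ => binTail p b t ^ 2) z
          + (Prod.fst ⁻¹' I ∩ D).indicator (fun _ => binTail p b t) z ∂(ν.prod ν) := by
        refine integral_mono_of_nonneg (.of_forall fun _ => measureReal_nonneg)
          (((integrable_const _).indicator hI2).add ((integrable_const _).indicator hID))
          (.of_forall fun ⟨x, y⟩ => ?_)
        by_cases hxy : x ∈ I ∧ y ∈ I
        · have := measureReal_pi_le_hits_comp_and_le_hits_comp_le hf hf'
            (fun x => measurable_prodMk_left hS) hp hD b t hxy.1 hxy.2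
          simpa [hxy, ← indicator_indicator] using this
        · have hempty : Prod.mk (x, y) ⁻¹' {z : (A × A) × (Fin b → Z) |
              (z.1.1 ∈ I ∧ t ≤ hits (S z.1.1) (f ∘ z.2)) ∧
                z.1.2 ∈ I ∧ t ≤ hits (S z.1.2) (f' ∘ z.2)} = ∅ :=
            eq_empty_of_forall_notMem fun w hw => hxy ⟨hw.1.1, hw.2.1⟩
          simp only [hempty, measureReal_empty]
          exact add_nonneg (indicator_nonneg (fun _ _ => sq_nonneg _) _)
            (indicator_nonneg (fun _ _ => h0) _)
    _ = ν.real I ^ 2 * binTail p b t ^ 2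
          + (ν.prod ν).real (Prod.fst ⁻¹' I ∩ D) * binTail p b t := by
        rw [integral_add ((integrable_const _).indicator hI2) ((integrable_const _).indicator hID),
          integral_indicator_const _ hI2, integral_indicator_const _ hID, measureReal_prod_prod]
        simp only [smul_eq_mul, sq]
    _ ≤ ν.real I ^ 2 * binTail p b t ^ 2 + ν.real I * κ * binTail p b t := by
        gcongr
        exact measureReal_prod_fst_mem_inter_le ν hI hDm hκ
    _ = _ := by ring

end Star

section StarLaw

/-- The uniform variable attached to the unordered pair `{i, j}`. -/
def edgeVar (M : Model d P) (i j : ℕ) (ω : Ω) : ℝ := M.U (min i j) (max i j) ω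

/-- The uniform distribution on the cube. -/
abbrev cubeMeasure (d : ℕ) : Measure (EuclideanSpace ℝ (Fin d)) := volume.restrict (cube d)

/-- The uniform distribution on the unit interval. -/
abbrev unifMeasure : Measure ℝ := volume.restrict (Icc (0 : ℝ) 1)

instance : IsProbabilityMeasure unifMeasure := ⟨by simp⟩

lemma measurable_edgeVar (M : Model d P) (i j : ℕ) : Measurable (edgeVar M i j) :=
  M.U_meas _ _

variable [IsProbabilityMeasure P]

lemma isProbabilityMeasure_cubeMeasure (M : Model d P) : IsProbabilityMeasure (cubeMeasure d) := by
  rw [cubeMeasure, ← M.X_unif 1 le_rfl]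
  exact Measure.isProbabilityMeasure_map (M.X_meas 1).aemeasurable

variable {ι κ : Type*} [Fintype ι] [Fintype κ] {c : κ → ℕ} {J : ι → ℕ}

lemma measurePreserving_positions (M : Model d P) (hinj : Function.Injective (Sum.elim c J))
    (hpos : ∀ x, 1 ≤ Sum.elim c J x) :
    MeasurePreserving (fun ω => ((fun k => M.X (c k) ω), fun j => M.X (J j) ω)) P
      ((Measure.pi fun _ => cubeMeasure d).prod (Measure.pi fun _ => cubeMeasure d)) := by
  have := isProbabilityMeasure_cubeMeasure M
  have hind := M.X_indep.precomp (g := fun x => ⟨Sum.elim c J x, hpos x⟩)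
    fun x y hxy => hinj (Subtype.ext_iff.1 hxy)
  exact (measurePreserving_sumPiEquivProdPi fun _ : κ ⊕ ι => cubeMeasure d).comp
    (measurePreserving_pi_of_iIndepFun (fun x => ⟨M.X_meas _, M.X_unif _ (hpos x)⟩) hind)

lemma measurePreserving_edges (M : Model d P) (hinj : Function.Injective (Sum.elim c J))
    (hpos : ∀ x, 1 ≤ Sum.elim c J x) :
    MeasurePreserving (fun ω j k => edgeVar M (c k) (J j) ω) P
      (Measure.pi fun _ : ι => Measure.pi fun _ : κ => unifMeasure) := by
  have hne : ∀ k j, c k ≠ J j := fun k j h => by simpa using hinj (a₁ := .inl k) (a₂ := .inr j) h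
  let e : ι × κ → {q : ℕ × ℕ // 1 ≤ q.1 ∧ q.1 < q.2} := fun x =>
    ⟨(min (c x.2) (J x.1), max (c x.2) (J x.1)),
      le_min (hpos (.inl x.2)) (hpos (.inr x.1)), min_lt_max.2 (hne _ _)⟩
  have he : Function.Injective e := by
    rintro ⟨j, k⟩ ⟨j', k'⟩ h
    have hmin : min (c k) (J j) = min (c k') (J j') := congrArg (fun q => q.1.1) h
    have hmax : max (c k) (J j) = max (c k') (J j') := congrArg (fun q => q.1.2) h
    have := hne k j'
    have hJ : J j = J j' := by omega
    have hc : c k = c k' := by omega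
    exact Prod.ext (Sum.inr_injective (hinj (a₁ := .inr j) (a₂ := .inr j') hJ))
      (Sum.inl_injective (hinj (a₁ := .inl k) (a₂ := .inl k') hc))
  have hcurry : MeasurePreserving (MeasurableEquiv.curry ι κ ℝ)
      (Measure.pi fun _ => unifMeasure) (Measure.pi fun _ => Measure.pi fun _ => unifMeasure) :=
    ⟨MeasurableEquiv.measurable _, by
      simpa only [Measure.infinitePi_eq_pi] using
        Measure.infinitePi_map_curry fun (_ : ι) (_ : κ) => unifMeasure⟩
  exact hcurry.comp (measurePreserving_pi_of_iIndepFun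
    (fun x => ⟨M.U_meas _ _, M.U_unif _ _ (e x).2.1 (e x).2.2⟩) (M.U_indep.precomp he))

omit [IsProbabilityMeasure P] in
lemma indepFun_positions_edges (M : Model d P) :
    IndepFun (fun ω i => M.X i ω) (fun ω (q : ℕ × ℕ) => M.U q.1 q.2 ω) P :=
  M.families_indep.indep (i := 0) (j := 2) (by decide)

lemma measurePreserving_star (M : Model d P) (hinj : Function.Injective (Sum.elim c J))
    (hpos : ∀ x, 1 ≤ Sum.elim c J x) :
    MeasurePreserving (fun ω => ((fun k => M.X (c k) ω),
        fun j => (M.X (J j) ω, fun k => edgeVar M (c k) (J j) ω))) P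
      ((Measure.pi fun _ => cubeMeasure d).prod
        (Measure.pi fun _ => (cubeMeasure d).prod (Measure.pi fun _ => unifMeasure))) := by
  have := isProbabilityMeasure_cubeMeasure M
  have hind : IndepFun (fun ω => ((fun k => M.X (c k) ω), fun j => M.X (J j) ω))
      (fun ω j k => edgeVar M (c k) (J j) ω) P :=
    (indepFun_positions_edges M).comp
      (φ := fun x : ℕ → EuclideanSpace ℝ (Fin d) => ((fun k => x (c k)), fun j => x (J j)))
      (ψ := fun (u : ℕ × ℕ → ℝ) j k => u (min (c k) (J j), max (c k) (J j)))
      (by fun_prop) (by fun_prop)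
  exact ((MeasurePreserving.id _).prod (measurePreserving_arrowProdEquivProdArrow _ _ ι
      (fun _ => cubeMeasure d) fun _ => Measure.pi fun _ : κ => unifMeasure).symm).comp
    ((measurePreserving_prodAssoc _ _ _).comp (measurePreserving_prodMk_of_indepFun
      (measurePreserving_positions M hinj hpos) (measurePreserving_edges M hinj hpos) hind))

lemma measurePreserving_star_one (M : Model d P) {i : ℕ} (hi : 1 ≤ i) (hJ : ∀ j, 1 ≤ J j)
    (hJi : ∀ j, J j ≠ i) (hJinj : Function.Injective J) :
    MeasurePreserving (fun ω => (M.X i ω, fun j => (M.X (J j) ω, edgeVar M i (J j) ω))) P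
      ((cubeMeasure d).prod (Measure.pi fun _ => (cubeMeasure d).prod unifMeasure)) := by
  have := isProbabilityMeasure_cubeMeasure M
  have hinj : Function.Injective (Sum.elim (fun _ : Unit => i) J) :=
    (Function.injective_of_subsingleton _).sumElim hJinj fun _ j h => hJi j h.symm
  exact ((measurePreserving_funUnique (cubeMeasure d) Unit).prod (measurePreserving_pi _ _ fun _ =>
    (MeasurePreserving.id _).prod (measurePreserving_funUnique unifMeasure Unit))).comp
    (measurePreserving_star M hinj (Sum.forall.2 ⟨fun _ => hi, hJ⟩))

lemma measurePreserving_star_two (M : Model d P) {i i' : ℕ} (hi : 1 ≤ i) (hi' : 1 ≤ i')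
    (hii : i ≠ i') (hJ : ∀ j, 1 ≤ J j) (hJi : ∀ j, J j ≠ i) (hJi' : ∀ j, J j ≠ i')
    (hJinj : Function.Injective J) :
    MeasurePreserving (fun ω => ((M.X i ω, M.X i' ω),
        fun j => (M.X (J j) ω, edgeVar M i (J j) ω, edgeVar M i' (J j) ω))) P
      (((cubeMeasure d).prod (cubeMeasure d)).prod
        (Measure.pi fun _ => (cubeMeasure d).prod (unifMeasure.prod unifMeasure))) := by
  have := isProbabilityMeasure_cubeMeasure M
  have hc : Function.Injective ![i, i'] := by
    intro k l
    fin_cases k <;> fin_cases l <;> simp [hii, hii.symm]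
  have hne : ∀ k j, ![i, i'] k ≠ J j := fun k j => by
    fin_cases k
    exacts [(hJi j).symm, (hJi' j).symm]
  have hpos : ∀ k, 1 ≤ ![i, i'] k := fun k => by
    fin_cases k
    exacts [hi, hi']
  exact ((measurePreserving_finTwoArrow (cubeMeasure d)).prod (measurePreserving_pi _ _ fun _ =>
    (MeasurePreserving.id _).prod (measurePreserving_finTwoArrow unifMeasure))).comp
    (measurePreserving_star M (hc.sumElim hJinj hne) (Sum.forall.2 ⟨hpos, hJ⟩))

end StarLaw

section StarEvent

/-- The event that `X i` lies in `I` and at least `t` of the vertices `J k` are linked to `i`, where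
`j` counts as linked to `i` when the position `X j` and the edge variable of `{i, j}` satisfy
`(X j, U i j) ∈ S (X i)`. -/
def starEvent (M : Model d P) (I : Set (EuclideanSpace ℝ (Fin d)))
    (S : EuclideanSpace ℝ (Fin d) → Set (EuclideanSpace ℝ (Fin d) × ℝ)) {b : ℕ} (J : Fin b → ℕ)
    (t i : ℕ) : Set Ω :=
  {ω | M.X i ω ∈ I ∧ t ≤ hits (S (M.X i ω)) fun k => (M.X (J k) ω, edgeVar M i (J k) ω)}

variable (M : Model d P) {I : Set (EuclideanSpace ℝ (Fin d))}
  {S : EuclideanSpace ℝ (Fin d) → Set (EuclideanSpace ℝ (Fin d) × ℝ)} {b : ℕ} {J : Fin b → ℕ}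
  {t i i' : ℕ} {p κ ρ : ℝ}

lemma measurableSet_starEvent (hI : MeasurableSet I)
    (hS : MeasurableSet {z : _ × (EuclideanSpace ℝ (Fin d) × ℝ) | z.2 ∈ S z.1}) (J : Fin b → ℕ)
    (t i : ℕ) : MeasurableSet (starEvent M I S J t i) :=
  measurableSet_mem_and_le_hits hI hS (M.X_meas i)
    (measurable_pi_lambda _ fun _ => (M.X_meas _).prodMk (measurable_edgeVar _ _ _)) t

variable [IsProbabilityMeasure P]

lemma measureReal_starEvent (hI : MeasurableSet I)
    (hS : MeasurableSet {z : _ × (EuclideanSpace ℝ (Fin d) × ℝ) | z.2 ∈ S z.1})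
    (hp : ∀ x ∈ I, ((cubeMeasure d).prod unifMeasure).real (S x) = p) (hi : 1 ≤ i)
    (hJ : ∀ k, 1 ≤ J k) (hJi : ∀ k, J k ≠ i) (hJinj : Function.Injective J) (t : ℕ) :
    P.real (starEvent M I S J t i) = (cubeMeasure d).real I * binTail p b t := by
  have := isProbabilityMeasure_cubeMeasure M
  rw [← measureReal_prod_pi_le_hits _ hI hS hp]
  exact (measurePreserving_star_one M hi hJ hJi hJinj).measureReal_preimage
    (measurableSet_mem_and_le_hits hI hS measurable_fst measurable_snd t).nullMeasurableSet

lemma measureReal_starEvent_le_choose_mul_pow (hI : MeasurableSet I)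
    (hS : MeasurableSet {z : _ × (EuclideanSpace ℝ (Fin d) × ℝ) | z.2 ∈ S z.1})
    (hp : ∀ᵐ x ∂cubeMeasure d, ((cubeMeasure d).prod unifMeasure).real (S x) ≤ p) (hi : 1 ≤ i)
    (hJ : ∀ k, 1 ≤ J k) (hJi : ∀ k, J k ≠ i) (hJinj : Function.Injective J) (t : ℕ) :
    P.real (starEvent M I S J t i) ≤ b.choose t * p ^ t := by
  have := isProbabilityMeasure_cubeMeasure M
  have hQ := measurableSet_mem_and_le_hits (b := b) hI hS measurable_fst measurable_snd t
  exact ((measurePreserving_star_one M hi hJ hJi hJinj).measureReal_preimage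
    hQ.nullMeasurableSet).trans_le (measureReal_prod_pi_le_hits_le_choose_mul_pow _ hI hS hp b t)

lemma measureReal_starEvent_inter_le (hI : MeasurableSet I)
    (hS : MeasurableSet {z : _ × (EuclideanSpace ℝ (Fin d) × ℝ) | z.2 ∈ S z.1})
    (hp : ∀ x ∈ I, ((cubeMeasure d).prod unifMeasure).real (S x) = p)
    (hρ : ∀ x ∈ I, ∀ z ∈ S x, dist x z.1 ≤ ρ)
    (hκ : ∀ x, (cubeMeasure d).real (Metric.closedBall x (2 * ρ)) ≤ κ) (hi : 1 ≤ i) (hi' : 1 ≤ i')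
    (hii : i ≠ i') (hJ : ∀ k, 1 ≤ J k) (hJi : ∀ k, J k ≠ i) (hJi' : ∀ k, J k ≠ i')
    (hJinj : Function.Injective J) (h0 : 0 ≤ binTail p b t) :
    P.real (starEvent M I S J t i ∩ starEvent M I S J t i')
      ≤ ((cubeMeasure d).real I * binTail p b t) ^ 2
        + κ * ((cubeMeasure d).real I * binTail p b t) := by
  have := isProbabilityMeasure_cubeMeasure M
  have hfst := (MeasurePreserving.id (cubeMeasure d)).prod
    (measurePreserving_fst (μ := unifMeasure) (ν := unifMeasure))
  have hsnd := (MeasurePreserving.id (cubeMeasure d)).prod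
    (measurePreserving_snd (μ := unifMeasure) (ν := unifMeasure))
  have hDm : MeasurableSet {z : EuclideanSpace ℝ (Fin d) × _ | dist z.2 z.1 ≤ 2 * ρ} :=
    measurableSet_le (by fun_prop) measurable_const
  have hdisj : ∀ x ∈ I, ∀ y ∈ I, (x, y) ∉ {z : _ × _ | dist z.2 z.1 ≤ 2 * ρ} →
      Disjoint (Prod.map id Prod.fst ⁻¹' S x : Set (_ × ℝ × ℝ)) (Prod.map id Prod.snd ⁻¹' S y) := by
    refine fun x hx y hy hxy => disjoint_left.2 fun z hz hz' => hxy ?_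
    calc dist y x ≤ dist y z.1 + dist x z.1 := dist_triangle_right y x z.1
      _ ≤ ρ + ρ := add_le_add (hρ y hy (z.1, z.2.2) hz') (hρ x hx (z.1, z.2.1) hz)
      _ = 2 * ρ := (two_mul ρ).symm
  have hQ := measurableSet_mem_and_le_hits_inter hfst.measurable hsnd.measurable hI hS b t
  have h := measureReal_prod_pi_le_hits_and_le_hits_le (cubeMeasure d) hfst hsnd hI hS hp
    hDm hdisj (fun x _ => hκ x) h0
  exact ((measurePreserving_star_two M hi hi' hii hJ hJi hJi' hJinj).measureReal_preimage
    hQ.nullMeasurableSet).trans_le h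

end StarEvent

section Links

lemma torusDist_nonneg (x y : EuclideanSpace ℝ (Fin d)) : 0 ≤ torusDist x y :=
  Real.iInf_nonneg fun _ => norm_nonneg _

lemma torusDist_le_norm (x y : EuclideanSpace ℝ (Fin d)) : torusDist x y ≤ ‖x - y‖ := by
  refine (ciInf_le ⟨0, forall_mem_range.2 fun _ => norm_nonneg _⟩ (0 : Fin d → ℤ)).trans_eq ?_
  congr 1
  ext i
  simp

lemma measurable_torusDist : Measurable fun z : _ × EuclideanSpace ℝ (Fin d) =>
    torusDist z.1 z.2 :=
  Measurable.iInf fun _ => by fun_prop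

lemma measurable_comp_g (M : Model d P) {B : Type*} [MeasurableSpace B] {f : B → ℝ}
    (hf : Measurable f) (h0 : ∀ z, 0 ≤ f z) : Measurable fun z => M.g (f z) := by
  have hanti : Antitone fun s => M.g (max s 0) := fun s s' h =>
    M.g_antitone (mem_Ici.2 (le_max_right s 0)) (mem_Ici.2 (le_max_right s' 0))
      (max_le_max_right 0 h)
  simpa only [Function.comp_def, max_eq_left (h0 _)] using hanti.measurable.comp hf

/-- The pairs `(y, u)` such that a vertex at `y` is linked, in the graph of radius `r`, to a vertex
at `x` when their edge variable is `u`. -/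
def links (M : Model d P) (r : ℝ) (x : EuclideanSpace ℝ (Fin d)) :
    Set (EuclideanSpace ℝ (Fin d) × ℝ) :=
  {z | z.2 ≤ M.g (torusDist x z.1 / r)}

/-- The links of Euclidean length at most `R * r` that are present already when the toroidal metric
is replaced by the Euclidean one. -/
def shortLinks (M : Model d P) (R r : ℝ) (x : EuclideanSpace ℝ (Fin d)) :
    Set (EuclideanSpace ℝ (Fin d) × ℝ) :=
  {z | dist x z.1 ≤ R * r ∧ z.2 ≤ M.g (dist x z.1 / r)}

variable (M : Model d P) {R r : ℝ} {x y : EuclideanSpace ℝ (Fin d)}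

lemma measurableSet_links (hr : 0 < r) :
    MeasurableSet {z : _ × (EuclideanSpace ℝ (Fin d) × ℝ) | z.2 ∈ links M r z.1} :=
  measurableSet_le (by fun_prop) (measurable_comp_g M
    ((measurable_torusDist.comp (f := fun z : _ × (EuclideanSpace ℝ (Fin d) × ℝ) => (z.1, z.2.1))
      (by fun_prop)).div_const r) fun z => div_nonneg (torusDist_nonneg _ _) hr.le)

lemma measurableSet_shortLinks (R : ℝ) (hr : 0 < r) :
    MeasurableSet {z : _ × (EuclideanSpace ℝ (Fin d) × ℝ) | z.2 ∈ shortLinks M R r z.1} :=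
  have hdist : Measurable fun z : _ × (EuclideanSpace ℝ (Fin d) × ℝ) => dist z.1 z.2.1 := by
    fun_prop
  (measurableSet_le hdist measurable_const).inter (measurableSet_le (by fun_prop)
    (measurable_comp_g M (hdist.div_const r) fun z => by positivity))

lemma unifMeasure_real_Iic {v : ℝ} (hv : v ∈ Icc (0 : ℝ) 1) : unifMeasure.real (Iic v) = v := by
  have hinter : Iic v ∩ Icc 0 1 = Icc 0 v := by
    rw [inter_comm, ← Ici_inter_Iic, inter_assoc, Iic_inter_Iic, inf_eq_right.2 hv.2,
      Ici_inter_Iic]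
  rw [measureReal_restrict_apply measurableSet_Iic, hinter, Real.volume_real_Icc_of_le hv.1,
    sub_zero]

/-- The mass of the connection function on the ball of radius `R`. -/
def truncMass (M : Model d P) (R : ℝ) : ℝ :=
  ∫ x in Metric.closedBall (0 : EuclideanSpace ℝ (Fin d)) R, M.g ‖x‖

lemma tendsto_truncMass : Tendsto (truncMass M) atTop (nhds M.α) := by
  rw [M.α_def]
  exact (aecover_closedBall tendsto_id).integral_tendsto_of_countably_generated M.g_integrable

lemma integral_comp_inv_smul_sub (f : EuclideanSpace ℝ (Fin d) → ℝ) (hr : 0 < r)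
    (x : EuclideanSpace ℝ (Fin d)) : ∫ y, f (r⁻¹ • (x - y)) = r ^ d * ∫ y, f y := by
  rw [integral_sub_left_eq_self (fun y => f (r⁻¹ • y)) volume x, Measure.integral_comp_inv_smul]
  simp [abs_of_pos hr]

lemma norm_inv_smul (hr : 0 < r) (x : EuclideanSpace ℝ (Fin d)) : ‖r⁻¹ • x‖ = ‖x‖ / r := by
  rw [norm_smul, norm_inv, Real.norm_of_nonneg hr.le, inv_mul_eq_div]

lemma closedBall_subset_cube {ρ : ℝ} (hx : ‖x‖ + ρ < 1 / 2) : Metric.closedBall x ρ ⊆ cube d := by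
  intro y hy i
  have hnorm : ‖y‖ ≤ ‖x‖ + ρ := by
    linarith [norm_sub_norm_le y x, mem_closedBall_iff_norm.1 hy]
  have hcoord := abs_le.1 ((PiLp.norm_apply_le y i).trans hnorm)
  constructor <;> linarith [hcoord.1, hcoord.2]

lemma unifMeasure_real_shortLinks (R : ℝ) (hr : 0 < r) (x y : EuclideanSpace ℝ (Fin d)) :
    unifMeasure.real (Prod.mk y ⁻¹' shortLinks M R r x)
      = (Metric.closedBall 0 R).indicator (fun z => M.g ‖z‖) (r⁻¹ • (x - y)) := by
  have hmem : r⁻¹ • (x - y) ∈ Metric.closedBall 0 R ↔ dist x y ≤ R * r := by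
    rw [mem_closedBall_zero_iff, norm_inv_smul hr, div_le_iff₀ hr, dist_eq_norm]
  by_cases h : dist x y ≤ R * r
  · have hg := M.g_mem (‖x - y‖ / r) (by positivity)
    rw [indicator_of_mem (hmem.2 h), norm_inv_smul hr, ← unifMeasure_real_Iic hg, ← dist_eq_norm]
    simp [shortLinks, h, Iic_def]
  · rw [indicator_of_notMem (mt hmem.1 h)]
    simp [shortLinks, h]

lemma measureReal_shortLinks [IsProbabilityMeasure P] (hr : 0 < r) (hx : ‖x‖ + R * r < 1 / 2) :
    ((cubeMeasure d).prod unifMeasure).real (shortLinks M R r x) = r ^ d * truncMass M R := by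
  have := isProbabilityMeasure_cubeMeasure M
  have hmeas : MeasurableSet (shortLinks M R r x) :=
    measurable_prodMk_left (measurableSet_shortLinks M R hr)
  rw [measureReal_prod_eq_integral hmeas,
    setIntegral_eq_integral_of_forall_compl_eq_zero]
  · simp only [unifMeasure_real_shortLinks M R hr]
    rw [integral_comp_inv_smul_sub _ hr,
      integral_indicator Metric.isClosed_closedBall.measurableSet, truncMass]
  · intro y hy
    have hfar : ¬ dist x y ≤ R * r := fun h => hy (closedBall_subset_cube hx (by
      rwa [Metric.mem_closedBall, dist_comm]))
    simp [shortLinks, hfar]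

/-- The lattice vector with coordinates `z`. -/
def latticeVec (z : Fin d → ℤ) : EuclideanSpace ℝ (Fin d) :=
  (WithLp.equiv 2 (Fin d → ℝ)).symm fun i => z i

/-- The lattice vectors with coordinates in `{-1, 0, 1}`; by `exists_norm_le_torusDist` they realise
the toroidal distance between points of the cube. -/
def nearLattice (d : ℕ) : Finset (Fin d → ℤ) :=
  Fintype.piFinset fun _ => {-1, 0, 1}

lemma exists_norm_le_torusDist (hx : x ∈ cube d) (hy : y ∈ cube d) :
    ∃ z ∈ nearLattice d, ‖x - y - latticeVec z‖ ≤ torusDist x y := by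
  refine ⟨fun i => round (x i - y i), Fintype.mem_piFinset.2 fun i => ?_, le_ciInf fun z => ?_⟩
  · have hround := abs_le.1 (abs_sub_round (x i - y i))
    have hlow : (-2 : ℝ) < round (x i - y i) := by linarith [(hx i).1, (hy i).2]
    have hupp : (round (x i - y i) : ℝ) < 2 := by linarith [(hx i).2, (hy i).1]
    have : -2 < round (x i - y i) := by exact_mod_cast hlow
    have : round (x i - y i) < 2 := by exact_mod_cast hupp
    simp only [Finset.mem_insert, Finset.mem_singleton]
    omega
  · rw [EuclideanSpace.norm_eq, EuclideanSpace.norm_eq]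
    gcongr with i
    simpa [latticeVec] using round_le (x i - y i) (z i)

lemma g_torusDist_le_sum (hr : 0 < r) (hx : x ∈ cube d) (hy : y ∈ cube d) :
    M.g (torusDist x y / r) ≤ ∑ z ∈ nearLattice d, M.g ‖r⁻¹ • (x - latticeVec z - y)‖ := by
  obtain ⟨z, hz, hle⟩ := exists_norm_le_torusDist hx hy
  refine le_trans ?_ (Finset.single_le_sum (fun _ _ => (M.g_mem _ (norm_nonneg _)).1) hz)
  rw [norm_inv_smul hr, sub_right_comm]
  exact M.g_antitone (mem_Ici.2 (by positivity))
    (mem_Ici.2 (div_nonneg (torusDist_nonneg _ _) hr.le)) (by gcongr)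

lemma measurableSet_cube : MeasurableSet (cube d) := by
  simp only [cube, ofPred_forall]
  exact MeasurableSet.iInter fun i =>
    (by fun_prop : Measurable fun x : EuclideanSpace ℝ (Fin d) => x i) measurableSet_Ioc

lemma measureReal_links_le [IsProbabilityMeasure P] (hr : 0 < r) (hx : x ∈ cube d) :
    ((cubeMeasure d).prod unifMeasure).real (links M r x) ≤ 3 ^ d * (r ^ d * M.α) := by
  have := isProbabilityMeasure_cubeMeasure M
  have hmeas : MeasurableSet (links M r x) := measurable_prodMk_left (measurableSet_links M hr)
  have hg : ∀ y, M.g (torusDist x y / r) ∈ Icc (0 : ℝ) 1 := fun y =>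
    M.g_mem _ (div_nonneg (torusDist_nonneg _ _) hr.le)
  have hint : ∀ z ∈ nearLattice d, Integrable fun y => M.g ‖r⁻¹ • (x - latticeVec z - y)‖ :=
    fun z _ => (M.g_integrable.comp_smul (inv_ne_zero hr.ne')).comp_sub_left (x - latticeVec z)
  have hsum := integrable_finsetSum _ hint
  rw [measureReal_prod_eq_integral hmeas]
  calc _ = ∫ y in cube d, M.g (torusDist x y / r) := by
        refine integral_congr_ae (.of_forall fun y => ?_)
        exact unifMeasure_real_Iic (hg y)
    _ ≤ ∫ y in cube d, ∑ z ∈ nearLattice d, M.g ‖r⁻¹ • (x - latticeVec z - y)‖ :=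
        integral_mono_of_nonneg (.of_forall fun y => (hg y).1) hsum.integrableOn
          ((ae_restrict_mem measurableSet_cube).mono fun y => g_torusDist_le_sum M hr hx)
    _ ≤ ∫ y, ∑ z ∈ nearLattice d, M.g ‖r⁻¹ • (x - latticeVec z - y)‖ :=
        setIntegral_le_integral hsum (.of_forall fun y =>
          Finset.sum_nonneg fun _ _ => (M.g_mem _ (norm_nonneg _)).1)
    _ = 3 ^ d * (r ^ d * M.α) := by
        rw [integral_finsetSum _ hint, M.α_def]
        simp only [integral_comp_inv_smul_sub (fun y => M.g ‖y‖) hr]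
        simp [nearLattice, Fintype.card_piFinset]

lemma cubeMeasure_real_closedBall_le (x : EuclideanSpace ℝ (Fin d)) {ρ : ℝ} (hρ : 0 ≤ ρ) :
    (cubeMeasure d).real (Metric.closedBall x ρ)
      ≤ ρ ^ d * volume.real (Metric.ball (0 : EuclideanSpace ℝ (Fin d)) 1) := by
  rw [measureReal_restrict_apply Metric.isClosed_closedBall.measurableSet]
  refine (measureReal_mono inter_subset_left measure_closedBall_lt_top.ne).trans_eq ?_
  rw [Measure.addHaar_real_closedBall _ _ hρ, finrank_euclideanSpace_fin]

lemma cubeMeasure_real_closedBall_pos {ρ : ℝ} (hρ : 0 < ρ) (hρ' : ρ < 1 / 2) :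
    0 < (cubeMeasure d).real (Metric.closedBall 0 ρ) := by
  rw [measureReal_restrict_apply Metric.isClosed_closedBall.measurableSet,
    inter_eq_left.2 (closedBall_subset_cube (by rwa [norm_zero, zero_add]))]
  exact ENNReal.toReal_pos (Metric.measure_closedBall_pos _ _ hρ).ne' measure_closedBall_lt_top.ne

end Links

section Counts

lemma map_N_eq_poissonMeasure (M : Model d P) (n : ℕ) : P.map (M.N n) = poissonMeasure n := by
  refine Measure.ext_of_singleton fun k => ?_
  rw [Measure.map_apply (M.N_meas n) (measurableSet_singleton k), poissonMeasure_singleton,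
    NNReal.coe_natCast]
  exact M.N_poisson n k

lemma measureReal_N_le_mul_le (M : Model d P) {x : ℝ} (hx : 0 < x) (hx1 : x ≤ 1) (n : ℕ) :
    P.real {ω | (M.N n ω : ℝ) ≤ x * n} ≤ Real.exp (-(n * H x)) := by
  have h := poissonMeasure_real_le_mul_le hx hx1 n
  rwa [← map_N_eq_poissonMeasure M, map_measureReal_apply (M.N_meas n) .of_discrete] at h

lemma measureReal_mul_le_N_le (M : Model d P) {x : ℝ} (hx1 : 1 ≤ x) (n : ℕ) :
    P.real {ω | x * n ≤ M.N n ω} ≤ Real.exp (-(n * H x)) := by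
  have h := poissonMeasure_real_mul_le_le hx1 n
  rwa [← map_N_eq_poissonMeasure M, map_measureReal_apply (M.N_meas n) .of_discrete] at h

end Counts

section LargeDeviations

lemma eventually_exp_neg_mul_le_binTail {ι : Type*} {f : Filter ι} {p l : ι → ℝ} {b t : ι → ℕ}
    {μ τ η : ℝ} (hl : Tendsto l f atTop) (hp : Tendsto p f (nhds 0)) (hp0 : ∀ᶠ k in f, 0 < p k)
    (hμ : 0 < μ) (hb : Tendsto (fun k => b k * p k / l k) f (nhds μ)) (hτ : 0 < τ)
    (ht : Tendsto (fun k => t k / l k) f (nhds τ)) (hη : μ * H (τ / μ) < η) :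
    ∀ᶠ k in f, Real.exp (-(η * l k)) ≤ binTail (p k) (b k) (t k) := by
  have hbt : Tendsto (fun k => ((b k : ℝ) - t k) * p k / l k) f (nhds μ) := by
    have := hb.sub (ht.mul hp)
    rw [mul_zero, sub_zero] at this
    exact this.congr fun k => by ring
  have hloglog : Tendsto (fun k => Real.log (t k / l k) / l k + Real.log (l k) / l k) f
      (nhds 0) := by
    simpa using ((ht.log hτ.ne').div_atTop hl).add
      (Real.isLittleO_log_id_atTop.tendsto_div_nhds_zero.comp hl)
  have hexponent : Tendsto (fun k => (t k / l k) * (Real.log (((b k : ℝ) - t k) * p k / l k)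
        - Real.log (t k / l k) + 1) - (1 / l k + (Real.log (t k / l k) / l k
        + Real.log (l k) / l k)) - b k * p k / l k / (1 - p k)) f
      (nhds (τ * (Real.log μ - Real.log τ + 1) - (0 + 0) - μ / (1 - 0))) :=
    ((ht.mul (((hbt.log hμ.ne').sub (ht.log hτ.ne')).add_const 1)).sub
      ((tendsto_const_nhds.div_atTop hl).add hloglog)).sub
      (hb.div (tendsto_const_nhds.sub hp) (by norm_num))
  have hlimit : -η < τ * (Real.log μ - Real.log τ + 1) - (0 + 0) - μ / (1 - 0) := by
    rw [H, Real.log_div hτ.ne' hμ.ne'] at hη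
    field_simp at hη
    linarith
  filter_upwards [hexponent.eventually_const_lt hlimit, hbt.eventually_const_lt hμ,
    ht.eventually_const_lt hτ, hl.eventually_gt_atTop 0, hp0, hp.eventually_lt_const one_pos]
    with k hk hbt0 ht0 hl0 hp0 hp1
  have ht1 : 0 < (t k : ℝ) := (div_pos_iff_of_pos_right hl0).1 ht0
  have hbt1 : 0 < ((b k : ℝ) - t k) * p k := (div_pos_iff_of_pos_right hl0).1 hbt0
  have htb : t k < b k := by exact_mod_cast sub_pos.1 ((pos_iff_pos_of_mul_pos hbt1).2 hp0)
  refine le_trans (Real.exp_le_exp.2 ?_) (exp_le_binTail hp0 hp1 (by exact_mod_cast ht1) htb)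
  rw [Real.log_div hbt1.ne' hl0.ne', Real.log_div ht1.ne' hl0.ne'] at hk
  have h := mul_le_mul_of_nonneg_right hk.le hl0.le
  field_simp at h ⊢
  linarith

end LargeDeviations

section Radius

variable (M : Model d P) {γ : ℝ}

lemma rhat_pow (hd : d ≠ 0) (hγ : 0 ≤ γ) (n : ℕ) :
    rhat M γ n ^ d = γ * Real.log n / (M.α * n) := by
  have := M.α_pos
  have := Real.log_natCast_nonneg n
  rw [rhat, one_div, Real.rpow_inv_natCast_pow (by positivity) hd]

lemma rhat_pos (hγ : 0 < γ) {n : ℕ} (hn : 2 ≤ n) : 0 < rhat M γ n := by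
  have := M.α_pos
  have := Real.log_pos (Nat.one_lt_cast.2 hn)
  unfold rhat
  positivity

lemma rhat_antitoneOn (hγ : 0 ≤ γ) : AntitoneOn (rhat M γ) (Ici 3) := by
  intro n hn m _ hnm
  have := M.α_pos
  have := Real.log_natCast_nonneg m
  have hexp : Real.exp 1 ≤ n := Real.exp_one_lt_three.le.trans (by exact_mod_cast hn)
  have hnm' : (n : ℝ) ≤ m := by exact_mod_cast hnm
  have hlog : Real.log m / m ≤ Real.log n / n :=
    Real.log_div_self_antitoneOn hexp (hexp.trans hnm') hnm'
  refine Real.rpow_le_rpow (by positivity) ?_ (by positivity)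
  rw [mul_div_mul_comm, mul_div_mul_comm]
  gcongr

lemma tendsto_log_natCast_div_self : Tendsto (fun n : ℕ => Real.log n / n) atTop (nhds 0) :=
  Real.isLittleO_log_id_atTop.tendsto_div_nhds_zero.comp tendsto_natCast_atTop_atTop

lemma tendsto_rhat (hd : d ≠ 0) (γ : ℝ) : Tendsto (rhat M γ) atTop (nhds 0) := by
  have hbase : Tendsto (fun n : ℕ => γ * Real.log n / (M.α * n)) atTop (nhds 0) := by
    simpa only [mul_div_mul_comm, mul_zero] using
      tendsto_log_natCast_div_self.const_mul (γ / M.α)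
  have hd' : 0 < (1 : ℝ) / d := by positivity
  rw [← Real.zero_rpow hd'.ne']
  exact hbase.rpow_const (.inr hd'.le)

end Radius

section Degrees

lemma hits_eq_ncard {Y : Type*} (S : Set Y) {b : ℕ} (w : Fin b → Y) :
    hits S w = {k | w k ∈ S}.ncard := by
  classical
  simp [hits, indicator_apply, ncard_eq_toFinset_card']

lemma finite_adj (M : Model d P) (n : ℕ) (r : ℝ) (ω : Ω) (i : ℕ) :
    {j | adj M n r ω i j}.Finite :=
  (finite_Iic (M.N n ω)).subset fun _ hj => hj.2.2.2.2.1

lemma le_maxDeg_of_mem_starEvent (M : Model d P) {n b t i : ℕ} {J : Fin b → ℕ} {R r r' : ℝ}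
    {ω : Ω} {I : Set (EuclideanSpace ℝ (Fin d))} (hr : 0 < r) (hr' : r ≤ r') (hi : 1 ≤ i)
    (hiN : i ≤ M.N n ω) (hJ : ∀ k, 1 ≤ J k) (hJN : ∀ k, J k ≤ M.N n ω) (hJi : ∀ k, J k ≠ i)
    (hJinj : Function.Injective J) (hω : ω ∈ starEvent M I (shortLinks M R r) J t i) :
    t ≤ maxDeg M n r' ω := by
  refine le_trans ?_ (Finset.le_sup (Finset.mem_Icc.2 ⟨hi, hiN⟩))
  have hcount := hω.2
  rw [hits_eq_ncard, ← ncard_image_of_injective _ hJinj] at hcount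
  refine hcount.trans (ncard_le_ncard ?_ (finite_adj M n r' ω i))
  rintro _ ⟨k, ⟨-, hU⟩, rfl⟩
  have hnonneg : 0 ≤ torusDist (M.X i ω) (M.X (J k) ω) / r' :=
    div_nonneg (torusDist_nonneg _ _) (hr.le.trans hr')
  have hle : torusDist (M.X i ω) (M.X (J k) ω) / r' ≤ dist (M.X i ω) (M.X (J k) ω) / r :=
    div_le_div₀ dist_nonneg ((torusDist_le_norm _ _).trans_eq (dist_eq_norm _ _).symm) hr hr'
  exact ⟨(hJi k).symm, hi, hJ k, hiN, hJN k,
    hU.trans (M.g_antitone (mem_Ici.2 hnonneg) (mem_Ici.2 (by positivity)) hle)⟩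

/-- The increasing enumeration of the vertices among `1, …, m` other than `i`. -/
def others (m i : ℕ) : Fin ((Finset.Icc 1 m).erase i).card → ℕ :=
  ((Finset.Icc 1 m).erase i).orderEmbOfFin rfl

lemma others_injective (m i : ℕ) : Function.Injective (others m i) :=
  (Finset.orderEmbOfFin _ rfl).injective

lemma range_others (m i : ℕ) : range (others m i) = (Finset.Icc 1 m).erase i :=
  Finset.range_orderEmbOfFin _ rfl

lemma others_mem (m i : ℕ) (k) : others m i k ∈ (Finset.Icc 1 m).erase i :=
  Finset.orderEmbOfFin_mem _ rfl k

lemma exists_mem_starEvent_of_le_maxDeg (M : Model d P) {n m t : ℕ} {r : ℝ} {ω : Ω}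
    (hN : M.N n ω ≤ m) (ht : 1 ≤ t) (h : t ≤ maxDeg M n r ω) :
    ∃ i ∈ Finset.Icc 1 m, ω ∈ starEvent M univ (links M r) (others m i) t i := by
  obtain ⟨i, hi, hti⟩ := (Finset.le_sup_iff (by exact ht)).1 h
  obtain ⟨hi1, hiN⟩ := Finset.mem_Icc.1 hi
  refine ⟨i, Finset.mem_Icc.2 ⟨hi1, hiN.trans hN⟩, mem_univ _, hti.trans ?_⟩
  rw [hits_eq_ncard, ← ncard_image_of_injective _ (others_injective m i)]
  refine ncard_le_ncard ?_ (toFinite _)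
  rintro j ⟨hij, -, hj, -, hjN, hU⟩
  obtain ⟨k, rfl⟩ : j ∈ range (others m i) := by
    rw [range_others, Finset.mem_coe, Finset.mem_erase, Finset.mem_Icc]
    exact ⟨hij.symm, hj, hjN.trans hN⟩
  exact mem_image_of_mem _ hU

end Degrees

section UpperBound

variable [IsProbabilityMeasure P] (M : Model d P) {r : ℝ}

lemma measureReal_starEvent_links_le (hr : 0 < r) {i : ℕ} (hi : 1 ≤ i) (m t : ℕ) :
    P.real (starEvent M univ (links M r) (others m i) t i)
      ≤ (m * (3 ^ d * (r ^ d * M.α))) ^ t / t.factorial := by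
  have := M.α_pos
  have hcard : ((Finset.Icc 1 m).erase i).card ≤ m := by
    simpa using Finset.card_erase_le (s := Finset.Icc 1 m) (a := i)
  calc _ ≤ ((Finset.Icc 1 m).erase i).card.choose t * (3 ^ d * (r ^ d * M.α)) ^ t :=
        measureReal_starEvent_le_choose_mul_pow M .univ (measurableSet_links M hr)
          ((ae_restrict_mem measurableSet_cube).mono fun x => measureReal_links_le M hr) hi
          (fun k => (Finset.mem_Icc.1 (Finset.mem_of_mem_erase (others_mem m i k))).1)
          (fun k => Finset.ne_of_mem_erase (others_mem m i k)) (others_injective m i) t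
    _ ≤ m.choose t * (3 ^ d * (r ^ d * M.α)) ^ t := by gcongr
    _ ≤ m ^ t / t.factorial * (3 ^ d * (r ^ d * M.α)) ^ t := by
        gcongr
        exact Nat.choose_le_pow_div t m
    _ = _ := by rw [mul_pow]; ring

lemma measureReal_le_maxDeg_le (hr : 0 < r) (n : ℕ) {t : ℕ} (ht : 1 ≤ t) :
    P.real {ω | t ≤ maxDeg M n r ω} ≤ Real.exp (-(n * H 2))
      + 2 * n * ((2 * n * (3 ^ d * (r ^ d * M.α))) ^ t / t.factorial) := by
  have hsub : {ω | t ≤ maxDeg M n r ω} ⊆ {ω | 2 * (n : ℝ) ≤ M.N n ω} ∪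
      ⋃ i ∈ Finset.Icc 1 (2 * n), starEvent M univ (links M r) (others (2 * n) i) t i := by
    intro ω hω
    by_cases h : 2 * n ≤ M.N n ω
    · exact .inl (by simpa using (Nat.cast_le (α := ℝ)).2 h)
    · obtain ⟨i, hi, hmem⟩ := exists_mem_starEvent_of_le_maxDeg M (not_le.1 h).le ht hω
      exact .inr (mem_biUnion hi hmem)
  calc _ ≤ P.real {ω | 2 * (n : ℝ) ≤ M.N n ω} + ∑ i ∈ Finset.Icc 1 (2 * n),
          P.real (starEvent M univ (links M r) (others (2 * n) i) t i) :=
        (measureReal_mono hsub).trans ((measureReal_union_le _ _).trans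
          (by gcongr; exact measureReal_biUnion_finset_le _ _))
    _ ≤ _ := by
        gcongr
        · exact measureReal_mul_le_N_le M one_le_two n
        · refine (Finset.sum_le_card_nsmul _ _ _ fun i hi => measureReal_starEvent_links_le M hr
            (Finset.mem_Icc.1 hi).1 (2 * n) t).trans_eq ?_
          simp

lemma pow_div_factorial_le_exp_neg {x c : ℝ} {t : ℕ} (hx : 0 ≤ x)
    (h : x * Real.exp (1 + c) ≤ t) : x ^ t / t.factorial ≤ Real.exp (-(t * c)) := by
  have hx' : x ≤ t * Real.exp (-(1 + c)) := by
    rwa [Real.exp_neg, ← div_eq_mul_inv, le_div_iff₀ (Real.exp_pos _)]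
  calc x ^ t / t.factorial ≤ (t * Real.exp (-(1 + c))) ^ t / t.factorial := by gcongr
    _ = (t : ℝ) ^ t / t.factorial * Real.exp (t * -(1 + c)) := by
        rw [mul_pow, ← Real.exp_nat_mul]; ring
    _ ≤ Real.exp t * Real.exp (t * -(1 + c)) := by
        gcongr
        exact Real.pow_div_factorial_le_exp _ t.cast_nonneg t
    _ = _ := by rw [← Real.exp_add]; ring_nf

lemma measureReal_ceil_le_maxDeg_rhat_le (hd : d ≠ 0) {γ : ℝ} (hγ : 0 < γ) {n : ℕ}
    (hn : 2 ≤ n) :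
    P.real {ω | ⌈(2 * 3 ^ d * γ * Real.exp 3 + 1) * Real.log n⌉₊ ≤ maxDeg M n (rhat M γ n) ω}
      ≤ ((H 2)⁻¹ + 2) / n := by
  have := M.α_pos
  have hn0 : (0 : ℝ) < n := by positivity
  have hlog := Real.log_pos (Nat.one_lt_cast.2 hn)
  have hH : 0 < H 2 := H_pos two_pos (by norm_num)
  set t := ⌈(2 * 3 ^ d * γ * Real.exp 3 + 1) * Real.log n⌉₊
  have htle : (2 * 3 ^ d * γ * Real.exp 3 + 1) * Real.log n ≤ t := Nat.le_ceil _
  have hA : 0 ≤ 2 * 3 ^ d * γ * Real.log n * Real.exp 3 := by positivity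
  have hmean : 2 * n * (3 ^ d * (rhat M γ n ^ d * M.α)) = 2 * 3 ^ d * γ * Real.log n := by
    rw [rhat_pow M hd hγ.le]
    field_simp
  have hpow : (2 * 3 ^ d * γ * Real.log n) ^ t / t.factorial ≤ ((n : ℝ) ^ 2)⁻¹ :=
    calc _ ≤ Real.exp (-(t * 2)) :=
          pow_div_factorial_le_exp_neg (by positivity) (by norm_num; linarith)
      _ ≤ Real.exp (-(Real.log n * 2)) := by
          gcongr
          linarith
      _ = ((n : ℝ) ^ 2)⁻¹ := by
          rw [Real.exp_neg, mul_comm, ← Real.log_rpow hn0, Real.exp_log (by positivity),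
            Real.rpow_two]
  have hcount : Real.exp (-(n * H 2)) ≤ (n * H 2)⁻¹ := by
    rw [Real.exp_neg]
    gcongr
    linarith [Real.add_one_le_exp (n * H 2)]
  calc _ ≤ Real.exp (-(n * H 2)) + 2 * n * ((2 * 3 ^ d * γ * Real.log n) ^ t / t.factorial) := by
        rw [← hmean]
        exact measureReal_le_maxDeg_le M (rhat_pos M hγ hn) n
          (Nat.one_le_ceil_iff.2 (by positivity))
    _ ≤ (n * H 2)⁻¹ + 2 * n * ((n : ℝ) ^ 2)⁻¹ := by gcongr
    _ = ((H 2)⁻¹ + 2) / n := by field_simp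

lemma ae_isCoboundedUnder_maxDeg (hd : d ≠ 0) {γ : ℝ} (hγ : 0 < γ) :
    ∀ᵐ ω ∂P, IsCoboundedUnder (· ≥ ·) atTop
      fun n : ℕ => (maxDeg M n (rhat M γ n) ω : ℝ) / Real.log n := by
  have hsq : ∀ k : ℕ, k + 2 ≤ (k + 2) ^ 2 := fun k => Nat.le_self_pow two_ne_zero _
  have htend : Tendsto (fun k : ℕ => (k + 2) ^ 2) atTop atTop :=
    tendsto_atTop_mono (fun k => (Nat.le_add_right k 2).trans (hsq k)) tendsto_id
  have hsum : Summable fun k : ℕ => ((H 2)⁻¹ + 2) / (((k + 2) ^ 2 : ℕ) : ℝ) := by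
    simpa [div_eq_mul_inv] using
      ((summable_nat_add_iff 2).2 (Real.summable_nat_pow_inv.2 one_lt_two)).mul_left ((H 2)⁻¹ + 2)
  filter_upwards [ae_eventually_notMem_of_le hsum (.of_forall fun k =>
    measureReal_ceil_le_maxDeg_rhat_le M hd hγ ((Nat.le_add_left 2 k).trans (hsq k)))] with ω hω
  refine .of_frequently_le (a := 2 * 3 ^ d * γ * Real.exp 3 + 1)
    (htend.frequently (hω.mono fun k hk => ?_).frequently)
  rw [div_le_iff₀ (Real.log_pos (Nat.one_lt_cast.2 ((Nat.le_add_left 2 k).trans (hsq k))))]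
  exact (Nat.lt_ceil.1 (not_le.1 hk)).le

end UpperBound

section LowerBound

/-- The event that no vertex among `1, …, a` that lies near the centre of the cube has `t` short
links to the vertices `a + 1, …, a + b`. -/
def noStarEvent (M : Model d P) (R r : ℝ) (a b t : ℕ) : Set Ω :=
  {ω | ∀ i ∈ Finset.Icc 1 a, ω ∉ starEvent M (Metric.closedBall 0 (1 / 4)) (shortLinks M R r)
    (fun k : Fin b => a + 1 + k) t i}

variable (M : Model d P) {R : ℝ}

lemma le_maxDeg_of_notMem_noStarEvent {n a b t : ℕ} {r r' : ℝ} {ω : Ω} (hr : 0 < r)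
    (hr' : r ≤ r') (hN : a + b ≤ M.N n ω) (hω : ω ∉ noStarEvent M R r a b t) :
    t ≤ maxDeg M n r' ω := by
  obtain ⟨i, hi, hmem⟩ : ∃ i ∈ Finset.Icc 1 a, ω ∈ starEvent M (Metric.closedBall 0 (1 / 4))
      (shortLinks M R r) (fun k : Fin b => a + 1 + k) t i := by
    simpa only [noStarEvent, mem_ofPred_eq, not_forall, not_not, exists_prop] using hω
  obtain ⟨hi1, hia⟩ := Finset.mem_Icc.1 hi
  exact le_maxDeg_of_mem_starEvent M hr hr' hi1 (by omega) (fun k => by omega)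
    (fun k => by omega) (fun k => by omega) (fun k k' h => Fin.ext (by simpa using h)) hmem

lemma measureReal_noStarEvent_le [IsProbabilityMeasure P] {r : ℝ} (hR : 0 ≤ R) (hr : 0 < r)
    (hRr : R * r < 1 / 4) {a b t : ℕ} (ha : 1 ≤ a)
    (hpos : 0 < binTail (r ^ d * truncMass M R) b t) :
    P.real (noStarEvent M R r a b t) ≤
      (1 + a * ((2 * (R * r)) ^ d *
        volume.real (Metric.ball (0 : EuclideanSpace ℝ (Fin d)) 1))) /
      (a * ((cubeMeasure d).real (Metric.closedBall 0 (1 / 4)) *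
        binTail (r ^ d * truncMass M R) b t)) := by
  have hI : MeasurableSet (Metric.closedBall (0 : EuclideanSpace ℝ (Fin d)) (1 / 4)) :=
    Metric.isClosed_closedBall.measurableSet
  have hS := measurableSet_shortLinks M R hr
  have hp : ∀ x ∈ Metric.closedBall (0 : EuclideanSpace ℝ (Fin d)) (1 / 4),
      ((cubeMeasure d).prod unifMeasure).real (shortLinks M R r x) = r ^ d * truncMass M R :=
    fun x hx => measureReal_shortLinks M hr (by linarith [mem_closedBall_zero_iff.1 hx])
  have hinj : Function.Injective fun k : Fin b => a + 1 + (k : ℕ) :=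
    fun k k' h => Fin.ext (by simpa using h)
  have hv := cubeMeasure_real_closedBall_pos (d := d) (by norm_num : (0 : ℝ) < 1 / 4) (by norm_num)
  have h := measureReal_forall_notMem_le (P := P) (s := Finset.Icc 1 a)
    (Finset.nonempty_Icc.2 ha) (fun i _ => measurableSet_starEvent M hI hS
      (fun k : Fin b => a + 1 + k) t i) (mul_pos hv hpos) (κ := (2 * (R * r)) ^ d *
      volume.real (Metric.ball (0 : EuclideanSpace ℝ (Fin d)) 1)) (by positivity)
    (fun i hi => ?_) (fun i hi j hj hij => ?_)
  · rwa [Nat.card_Icc, Nat.add_sub_cancel] at h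
  · obtain ⟨hi1, hia⟩ := Finset.mem_Icc.1 hi
    exact measureReal_starEvent M hI hS hp hi1 (fun k => by omega) (fun k => by omega) hinj t
  · obtain ⟨hi1, hia⟩ := Finset.mem_Icc.1 hi
    obtain ⟨hj1, hja⟩ := Finset.mem_Icc.1 hj
    exact measureReal_starEvent_inter_le M hI hS hp (fun x _ z hz => hz.1)
      (fun x => cubeMeasure_real_closedBall_le x (by positivity)) hi1 hj1 hij (fun k => by omega)
      (fun k => by omega) (fun k => by omega) hinj hpos.le

variable {ι : Type*} {f : Filter ι} {a b t n : ι → ℕ} {γ β τ ε η δ : ℝ}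

lemma eventually_exp_neg_mul_log_le_binTail_rhat (hd : d ≠ 0) (hγ : 0 < γ)
    (hT : 0 < truncMass M R) (hn : Tendsto n f atTop) (hβ : 0 < β)
    (hb : Tendsto (fun k => b k / (n k : ℝ)) f (nhds β)) (hτ : 0 < τ)
    (ht : Tendsto (fun k => t k / Real.log (n k)) f (nhds τ))
    (hη : β * γ * truncMass M R / M.α * H (τ / (β * γ * truncMass M R / M.α)) < η) :
    ∀ᶠ k in f, Real.exp (-(η * Real.log (n k))) ≤
      binTail (rhat M γ (n k) ^ d * truncMass M R) (b k) (t k) := by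
  have hα := M.α_pos
  have hnpos := hn.eventually_ge_atTop 2
  have hlog := Real.tendsto_log_atTop.comp (tendsto_natCast_atTop_atTop.comp hn)
  have hr : Tendsto (fun k => rhat M γ (n k) ^ d * truncMass M R) f (nhds 0) := by
    have h := (((tendsto_rhat M hd γ).comp hn).pow d).mul_const (truncMass M R)
    rwa [zero_pow hd, zero_mul] at h
  have hbr : Tendsto (fun k => b k * (rhat M γ (n k) ^ d * truncMass M R) / Real.log (n k)) f
      (nhds (β * γ * truncMass M R / M.α)) := by
    have h := hb.mul_const (γ * truncMass M R / M.α)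
    rw [← mul_div_assoc, ← mul_assoc] at h
    refine h.congr' (hnpos.mono fun k hk => ?_)
    have := Real.log_pos (Nat.one_lt_cast.2 hk)
    simp only [rhat_pow M hd hγ.le]
    field_simp
  exact eventually_exp_neg_mul_le_binTail hlog hr
    (hnpos.mono fun k hk => mul_pos (pow_pos (rhat_pos M hγ hk) d) hT)
    (by positivity) hbr hτ ht hη

lemma measureReal_noStarEvent_rhat_le [IsProbabilityMeasure P] (hd : d ≠ 0) (hγ : 0 < γ)
    (hR : 0 ≤ R) {n a b t : ℕ} (hn : 2 ≤ n) (hRr : R * rhat M γ n < 1 / 4) (hε : 0 < ε)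
    (hεa : ε * n ≤ a) (han : a ≤ n)
    (hbin : Real.exp (-(η * Real.log n)) ≤ binTail (rhat M γ n ^ d * truncMass M R) b t) :
    P.real (noStarEvent M R (rhat M γ n) a b t) ≤
      (1 + (2 * R) ^ d * volume.real (Metric.ball (0 : EuclideanSpace ℝ (Fin d)) 1) * γ / M.α *
        Real.log n) / (ε * (cubeMeasure d).real (Metric.closedBall 0 (1 / 4)) *
          Real.exp ((1 - η) * Real.log n)) := by
  set v := (cubeMeasure d).real (Metric.closedBall 0 (1 / 4))
  set V := volume.real (Metric.ball (0 : EuclideanSpace ℝ (Fin d)) 1)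
  have hv : 0 < v := cubeMeasure_real_closedBall_pos (by norm_num) (by norm_num)
  have hα := M.α_pos
  have hr := rhat_pos M hγ hn
  have hn0 : 0 < (n : ℝ) := by positivity
  have ha0 : 0 < (a : ℝ) := (by positivity : 0 < ε * n).trans_le hεa
  have hnum : 1 + a * ((2 * (R * rhat M γ n)) ^ d * V) ≤
      1 + (2 * R) ^ d * V * γ / M.α * Real.log n :=
    calc _ ≤ 1 + n * ((2 * (R * rhat M γ n)) ^ d * V) := by gcongr
      _ = _ := by
        rw [← mul_assoc 2 R, mul_pow, rhat_pow M hd hγ.le]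
        field_simp
  have hden : ε * v * Real.exp ((1 - η) * Real.log n) ≤
      a * (v * binTail (rhat M γ n ^ d * truncMass M R) b t) :=
    calc _ = ε * n * (v * Real.exp (-(η * Real.log n))) := by
          rw [sub_mul, one_mul, sub_eq_add_neg, Real.exp_add, Real.exp_log hn0]
          ring
      _ ≤ _ := by gcongr
  exact (measureReal_noStarEvent_le M hR hr hRr (Nat.cast_pos.1 ha0)
    (hbin.trans_lt' (Real.exp_pos _))).trans
    (div_le_div₀ (hnum.trans' (by positivity)) hnum (by positivity) hden)

lemma eventually_one_add_mul_le_mul_exp (D : ℝ) {C σ : ℝ} (hC : 0 < C) (hσ : 0 < σ) :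
    ∀ᶠ y : ℝ in atTop, 1 + D * y ≤ C * Real.exp (σ * y) := by
  have hlittle : (fun y : ℝ => 1 + D * y) =o[atTop] fun y => Real.exp (σ * y) := by
    simpa using (isLittleO_pow_exp_pos_mul_atTop 0 hσ).add
      ((isLittleO_pow_exp_pos_mul_atTop 1 hσ).const_mul_left D)
  filter_upwards [hlittle.bound hC] with y hy
  rw [Real.norm_of_nonneg (Real.exp_pos _).le] at hy
  exact (le_abs_self _).trans hy

lemma eventually_measureReal_noStarEvent_rhat_le [IsProbabilityMeasure P] (hd : d ≠ 0)
    (hγ : 0 < γ) (hR : 0 ≤ R) (hn : Tendsto n f atTop) (hε : 0 < ε) (hε1 : ε < 1)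
    (ha : Tendsto (fun k => a k / (n k : ℝ)) f (nhds ε))
    (hbin : ∀ᶠ k in f, Real.exp (-(η * Real.log (n k))) ≤
      binTail (rhat M γ (n k) ^ d * truncMass M R) (b k) (t k))
    (hδ : η + δ < 1) :
    ∀ᶠ k in f, P.real (noStarEvent M R (rhat M γ (n k)) (a k) (b k) (t k)) ≤
      (n k : ℝ) ^ (-δ) := by
  set v := (cubeMeasure d).real (Metric.closedBall 0 (1 / 4))
  set V := volume.real (Metric.ball (0 : EuclideanSpace ℝ (Fin d)) 1)
  have hv : 0 < v := cubeMeasure_real_closedBall_pos (by norm_num) (by norm_num)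
  have hlog : Tendsto (fun k => Real.log (n k)) f atTop :=
    Real.tendsto_log_atTop.comp (tendsto_natCast_atTop_atTop.comp hn)
  have hRr : Tendsto (fun k => R * rhat M γ (n k)) f (nhds 0) := by
    simpa only [mul_zero, Function.comp_apply] using ((tendsto_rhat M hd γ).comp hn).const_mul R
  filter_upwards [hbin, hn.eventually_ge_atTop 2, ha.eventually_const_lt (half_lt_self hε),
    ha.eventually_lt_const hε1, hRr.eventually_lt_const (by norm_num : (0 : ℝ) < 1 / 4),
    hlog.eventually (eventually_one_add_mul_le_mul_exp ((2 * R) ^ d * V * γ / M.α)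
      (by positivity : 0 < ε / 2 * v) (by linarith : 0 < 1 - η - δ))]
    with k hbin hn2 halow haupp hRr hexp
  have hn0 : 0 < (n k : ℝ) := by positivity
  refine (measureReal_noStarEvent_rhat_le M hd hγ hR hn2 hRr (half_pos hε)
    ((lt_div_iff₀ hn0).1 halow).le (by exact_mod_cast ((div_lt_one hn0).1 haupp).le)
    hbin).trans ?_
  rw [div_le_iff₀ (by positivity), Real.rpow_def_of_pos hn0]
  refine hexp.trans_eq ?_
  rw [mul_left_comm, ← Real.exp_add]
  congr 2
  ring

end LowerBound

section RateFunction

lemma continuous_H : Continuous H :=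
  (continuous_const.sub continuous_id).add Real.continuous_mul_log

lemma H_lt_of_lt_Hplusinv {x y : ℝ} (hx : 1 ≤ x) (h : x < Hplusinv y) : H x < y := by
  have hnot := notMem_of_lt_csInf h ⟨1, fun z hz => hz.1⟩
  exact not_le.1 fun hy => hnot ⟨hx, hy⟩

lemma exists_one_le_and_le_H (y : ℝ) : ∃ x, 1 ≤ x ∧ y ≤ H x := by
  refine ⟨Real.exp (2 + |y|), Real.one_le_exp (by positivity), ?_⟩
  have h := Real.add_one_le_exp (2 + |y|)
  rw [H, Real.log_exp]
  nlinarith [le_abs_self y, abs_nonneg y]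

lemma Hplusinv_mono : Monotone Hplusinv := fun _ y' h =>
  csInf_le_csInf ⟨1, fun _ hx => hx.1⟩ (exists_one_le_and_le_H y') fun _ hx => ⟨hx.1, h.trans hx.2⟩

lemma one_lt_Hplusinv {y : ℝ} (hy : 0 < y) : 1 < Hplusinv y := by
  have hlt : ∀ᶠ x in nhds 1, H x < y :=
    continuous_H.tendsto 1 |>.eventually_lt_const (by simpa [H] using hy)
  obtain ⟨l, u, hlu, hsub⟩ := mem_nhds_iff_exists_Ioo_subset.1 hlt
  refine hlu.2.trans_le (le_csInf (exists_one_le_and_le_H y) fun x hx => not_lt.1 fun hxu => ?_)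
  exact (hsub ⟨hlu.1.trans_le hx.1, hxu⟩).not_ge hx.2

end RateFunction

section AlmostSure

lemma tendsto_floor_mul_div {ι : Type*} {f : Filter ι} {m n : ι → ℕ} {ε : ℝ}
    (hm : Tendsto m f atTop) (hmn : Tendsto (fun k => (m k : ℝ) / n k) f (nhds 1)) (hε : 0 ≤ ε) :
    Tendsto (fun k => (⌊ε * m k⌋₊ : ℝ) / n k) f (nhds ε) := by
  have h := ((tendsto_nat_floor_mul_div_atTop hε).comp
    (tendsto_natCast_atTop_atTop.comp hm)).mul hmn
  rw [mul_one] at h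
  refine h.congr' ((hm.eventually_gt_atTop 0).mono fun k hk => ?_)
  exact div_mul_div_cancel₀ (Nat.cast_ne_zero.2 hk.ne')

lemma tendsto_succ_pow_div_succ_succ_pow (s : ℕ) :
    Tendsto (fun k : ℕ => (((k + 1) ^ s : ℕ) : ℝ) / ((k + 2) ^ s : ℕ)) atTop (nhds 1) := by
  have h := (((tendsto_natCast_div_add_atTop (1 : ℝ)).comp (tendsto_add_atTop_nat 1)).pow s)
  rw [one_pow] at h
  refine h.congr fun k => ?_
  rw [Function.comp_apply, div_pow]
  push_cast
  ring

lemma tendsto_add_pow_atTop {s : ℕ} (hs : s ≠ 0) (j : ℕ) :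
    Tendsto (fun k : ℕ => (k + j) ^ s) atTop atTop :=
  (tendsto_pow_atTop hs).comp (tendsto_add_atTop_nat j)

lemma eventually_exists_lt_and_le_succ {t : ℕ → ℕ} (ht : StrictMono t) {p : ℕ → Prop}
    (hp : ∀ᶠ k in atTop, p k) : ∀ᶠ n in atTop, ∃ k, p k ∧ t k < n ∧ n ≤ t (k + 1) := by
  obtain ⟨K, hK⟩ := eventually_atTop.1 hp
  filter_upwards [eventually_gt_atTop (t K)] with n hn
  obtain ⟨k, hkn, hnk⟩ := ht.exists_between_of_tendsto_atTop ht.tendsto_atTop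
    ((ht.monotone K.zero_le).trans_lt hn)
  exact ⟨k, hK k (Nat.lt_succ_iff.1 (ht.lt_iff_lt.1 (hn.trans_le hnk))), hkn, hnk⟩

variable (M : Model d P) {γ τ ε η δ R : ℝ}

lemma exists_mul_H_lt_one (hγ : 0 < γ) {x : ℝ} (hH : γ * H x < 1) :
    ∃ ε : ℝ, 0 < ε ∧ ε < 1 / 2 ∧ 0 < truncMass M ε⁻¹ ∧
      (1 - 2 * ε) * γ * truncMass M ε⁻¹ / M.α *
        H (γ * x / ((1 - 2 * ε) * γ * truncMass M ε⁻¹ / M.α)) < 1 := by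
  have hα := M.α_pos
  have hε : Tendsto (fun ε : ℝ => ε) (nhdsWithin 0 (Ioi 0)) (nhds 0) :=
    tendsto_nhdsWithin_of_tendsto_nhds tendsto_id
  have hT := (tendsto_truncMass M).comp tendsto_inv_nhdsGT_zero
  have hmean : Tendsto (fun ε : ℝ => (1 - 2 * ε) * γ * truncMass M ε⁻¹ / M.α)
      (nhdsWithin 0 (Ioi 0)) (nhds γ) := by
    have h := ((((hε.const_mul 2).const_sub 1).mul_const γ).mul hT).div_const M.α
    rwa [mul_zero, sub_zero, one_mul, mul_div_cancel_right₀ _ hα.ne'] at h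
  have hrate := hmean.mul ((continuous_H.tendsto _).comp
    ((tendsto_const_nhds (x := γ * x)).div hmean hγ.ne'))
  rw [mul_div_cancel_left₀ _ hγ.ne'] at hrate
  obtain ⟨ε, h0, h1, h2, h3⟩ := (eventually_mem_nhdsWithin.and ((hε.eventually_lt_const
    (by norm_num : (0 : ℝ) < 1 / 2)).and ((hT.eventually_const_lt hα).and
    (hrate.eventually_lt_const hH)))).exists
  exact ⟨ε, h0, h1, h2, h3⟩

variable [IsProbabilityMeasure P]

lemma ae_eventually_mul_lt_N {x : ℝ} (hx : 0 < x) (hx1 : x < 1) :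
    ∀ᵐ ω ∂P, ∀ᶠ n : ℕ in atTop, x * n < M.N n ω := by
  filter_upwards [ae_eventually_notMem_of_le (summable_exp_neg_nat_mul (H_pos hx hx1.ne))
    (.of_forall (measureReal_N_le_mul_le M hx hx1.le))] with ω hω
  exact hω.mono fun n hn => not_le.1 hn

lemma ae_eventually_notMem_noStarEvent (hd : d ≠ 0) (hγ : 0 < γ) (hR : 0 ≤ R)
    (hT : 0 < truncMass M R) (hε : 0 < ε) (hε1 : ε < 1 / 2) (hτ : 0 < τ)
    (hη : (1 - 2 * ε) * γ * truncMass M R / M.α *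
      H (τ / ((1 - 2 * ε) * γ * truncMass M R / M.α)) < η)
    (hδ : η + δ < 1) {s : ℕ} (hs : 1 < s * δ) :
    ∀ᵐ ω ∂P, ∀ᶠ k : ℕ in atTop, ω ∉ noStarEvent M R (rhat M γ ((k + 2) ^ s))
      ⌊ε * ((k + 1) ^ s : ℕ)⌋₊ ⌊(1 - 2 * ε) * ((k + 1) ^ s : ℕ)⌋₊
      ⌈τ * Real.log ((k + 2) ^ s : ℕ)⌉₊ := by
  have hs0 : s ≠ 0 := by
    rintro rfl
    norm_num at hs
  have hm := tendsto_add_pow_atTop hs0 1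
  have hn := tendsto_add_pow_atTop hs0 2
  have hmn := tendsto_succ_pow_div_succ_succ_pow s
  have hlog : Tendsto (fun k : ℕ => Real.log ((k + 2) ^ s : ℕ)) atTop atTop :=
    Real.tendsto_log_atTop.comp (tendsto_natCast_atTop_atTop.comp hn)
  have hbin := eventually_exp_neg_mul_log_le_binTail_rhat M hd hγ hT hn (by linarith)
    (tendsto_floor_mul_div hm hmn (by linarith)) hτ
    ((tendsto_nat_ceil_mul_div_atTop hτ.le).comp hlog) hη
  have hsum : Summable fun k : ℕ => (((k + 2) ^ s : ℕ) : ℝ) ^ (-δ) := by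
    have h := (summable_nat_add_iff 2).2 (Real.summable_nat_rpow.2 (neg_lt_neg hs))
    refine h.congr fun k => ?_
    rw [Nat.cast_pow, ← Real.rpow_natCast, ← Real.rpow_mul (by positivity), mul_neg]
  exact ae_eventually_notMem_of_le hsum (eventually_measureReal_noStarEvent_rhat_le M hd hγ hR hn
    hε (by linarith) (tendsto_floor_mul_div hm hmn hε.le) hbin hδ)

lemma ae_eventually_le_maxDeg (hd : d ≠ 0) (hγ : 0 < γ) {x : ℝ} (hx : 0 < x)
    (hH : γ * H x < 1) :
    ∀ᵐ ω ∂P, ∀ᶠ n : ℕ in atTop, γ * x * Real.log n ≤ maxDeg M n (rhat M γ n) ω := by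
  obtain ⟨ε, hε, hε1, hT, hrate⟩ := exists_mul_H_lt_one M hγ hH
  obtain ⟨η, hη, hη1⟩ := exists_between hrate
  obtain ⟨δ, hδ, hδ1⟩ := exists_between (sub_pos.2 hη1)
  obtain ⟨s, hs⟩ := exists_lt_nsmul hδ 1
  rw [nsmul_eq_mul] at hs
  have hs0 : s ≠ 0 := by
    rintro rfl
    norm_num at hs
  have hmono : StrictMono fun k : ℕ => (k + 1) ^ s := fun k k' h =>
    Nat.pow_lt_pow_left (by omega) hs0
  filter_upwards [ae_eventually_mul_lt_N M (x := 1 - ε) (by linarith) (by linarith),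
    ae_eventually_notMem_noStarEvent M hd hγ (inv_nonneg.2 hε.le) hT hε hε1 (mul_pos hγ hx) hη
      (by linarith) hs] with ω hN hstar
  filter_upwards [eventually_exists_lt_and_le_succ hmono
    (((tendsto_add_pow_atTop hs0 1).eventually hN).and hstar), eventually_gt_atTop 3] with n hk hn
  obtain ⟨k, ⟨hNk, hstark⟩, hkn, hnk⟩ := hk
  have hcount : ⌊ε * ((k + 1) ^ s : ℕ)⌋₊ + ⌊(1 - 2 * ε) * ((k + 1) ^ s : ℕ)⌋₊ ≤ M.N n ω := by
    have hεk := Nat.floor_le (by positivity : 0 ≤ ε * ((k + 1) ^ s : ℕ))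
    have hεk' := Nat.floor_le (mul_nonneg (by linarith : 0 ≤ 1 - 2 * ε) ((k + 1) ^ s).cast_nonneg)
    refine le_trans ?_ (M.N_mono ω hkn.le)
    exact (Nat.cast_le (α := ℝ)).1 (by rw [Nat.cast_add]; linarith)
  have hnk' : n ≤ (k + 2) ^ s := hnk
  have hdeg := le_maxDeg_of_notMem_noStarEvent M (rhat_pos M hγ (by omega))
    (rhat_antitoneOn M hγ.le (mem_Ici.2 hn.le) (mem_Ici.2 (hn.le.trans hnk')) hnk') hcount hstark
  calc γ * x * Real.log n ≤ γ * x * Real.log ((k + 2) ^ s : ℕ) := by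
        have : 0 < n := by omega
        gcongr
    _ ≤ ⌈γ * x * Real.log ((k + 2) ^ s : ℕ)⌉₊ := Nat.le_ceil _
    _ ≤ _ := by exact_mod_cast hdeg

end AlmostSure

theorem maxDeg_liminf_ge_general (hd : d ≠ 0) [IsProbabilityMeasure P] (M : Model d P) {γ : ℝ}
    (hγ : 0 < γ) :
    ∀ᵐ ω ∂P, γ * Hplusinv (1 / γ) ≤
      liminf (fun n : ℕ => (maxDeg M n (rhat M γ n) ω : ℝ) / Real.log n) atTop := by
  obtain ⟨u, -, hu, hulim⟩ := exists_seq_strictMono_tendsto' (one_lt_Hplusinv (one_div_pos.2 hγ))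
  have hall : ∀ᵐ ω ∂P, ∀ j, ∀ᶠ n : ℕ in atTop,
      γ * u j * Real.log n ≤ maxDeg M n (rhat M γ n) ω := by
    refine ae_all_iff.2 fun j =>
      ae_eventually_le_maxDeg M hd hγ (one_pos.trans (hu j).1) ?_
    exact (lt_div_iff₀' hγ).1 (H_lt_of_lt_Hplusinv (hu j).1.le (hu j).2)
  filter_upwards [hall, ae_isCoboundedUnder_maxDeg M hd hγ] with ω hω hcob
  refine le_of_tendsto (hulim.const_mul γ) (.of_forall fun j => le_liminf_of_le hcob ?_)
  filter_upwards [hω j, eventually_ge_atTop 2] with n hn hn2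
  exact (le_div_iff₀ (Real.log_pos (Nat.one_lt_cast.2 hn2))).2 hn

/-- Theorem 3(iii): a.s. `liminf Δ_n/log n ≥ γ H₊⁻¹((c-3d)/(γ(c-d)))`. -/
theorem maxDeg_liminf_ge (hd : 2 ≤ d) [IsProbabilityMeasure P] (M : Model d P)
    {c : ℝ} (hc : (3 : ℝ) * d < c)
    (hg : M.g =o[atTop] fun r : ℝ => r ^ (-c))
    {γ : ℝ} (hγ : 0 < γ) :
    ∀ᵐ ω ∂P, γ * Hplusinv ((c - 3 * d) / (γ * (c - d))) ≤ Filter.liminf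
      (fun n : ℕ => (maxDeg M n (rhat M γ n) ω : ℝ) / Real.log n) atTop := by
  have hcd : 0 < c - d := by linarith [(Nat.cast_nonneg d : (0 : ℝ) ≤ d)]
  have hle : (c - 3 * d) / (γ * (c - d)) ≤ 1 / γ := by
    rw [div_mul_eq_div_div_swap, div_le_div_iff_of_pos_right hγ, div_le_one hcd]
    linarith
  filter_upwards [maxDeg_liminf_ge_general (by omega) M hγ] with ω hω
  exact (mul_le_mul_of_nonneg_left (Hplusinv_mono hle) hγ.le).trans hω

end RCM
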